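/- There exists a positive constant C such that for all positive integers N, the number of positive integers n ≤ N for which there exists an integer x with n! + 1 = x^2 is at most C·N^(33/34). -/

import Mathlib

open scoped Nat Classical

/-!
Suppose that `n + 2gᵢ` is a solution for sixteen distinct `gᵢ ≤ λ`, where `n ∈ [N, 2N]`. The square
roots of `(n + 2gᵢ)! + 1` are approximately `√n! n^{gᵢ} √P_{2gᵢ}(1/(4n))`, where `Pₑ = ∏ (1 + 4jX)`
over `1 ≤ j ≤ e`. The power series `√Pₑ` has integer coefficients of exponential growth, because
`√(1 + 4jX)` is expressed by Catalan numbers. Siegel's lemma provides integer polynomials `qᵢ` of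
degree at most `k ≈ N / 4` such that `∑ qᵢ √P_{2gᵢ}` vanishes to order `8k` at `0`. Each application
of `P_{2λ} d/dX` lowers this order by at most one and replaces the `qᵢ` by other polynomials `∇ʲqᵢ`.
Substituting `1/(4n)`, replacing the square root series by the integer square roots and clearing
denominators, one obtains integers less than `1` in absolute value, hence `0`: the rescaled square
roots form a vector in the kernel of the matrix `(∇ʲqᵢ)` at `1/(4n)`.

The Wronskian `det (∇ʲqᵢ)` is a nonzero polynomial, since no quotient `√(Pₑ/Pₑ')` with `e ≠ e'` is
rational. Comparing its degree with its orders of vanishing at the points `1/(4n)` bounds the number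
of such `n` by `6800 λ`. By the pigeonhole principle, all but few of the blocks of `λ` consecutive
integers of the same parity therefore contain at most fifteen solutions. The choice
`λ ≈ N^{1/34} / 4` keeps the growth `(16λ²)ᵐ` of the coefficients below the gain from the vanishing.
A dyadic summation concludes.
-/

namespace BrocardRamanujan

open Polynomial Finset

section TwistedDerivative

variable {A ι : Type*} [CommRing A] [Fintype ι]

/-- The operator `∇ = Q · d/dX + R` on `A[X]`. If `Q * F' = R * F`, then `Q · d/dX` maps `q F` to
`(∇ q) F`. -/
noncomputable def twistedDeriv (Q R q : A[X]) : A[X] :=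
  Q * derivative q + R * q

theorem twistedDeriv_iterate_zero (Q R : A[X]) (j : ℕ) : (twistedDeriv Q R)^[j] 0 = 0 :=
  Function.iterate_fixed (by simp [twistedDeriv]) j

theorem map_twistedDeriv_iterate {B : Type*} [CommRing B] (f : A →+* B) (Q R q : A[X]) (j : ℕ) :
    ((twistedDeriv Q R)^[j] q).map f = (twistedDeriv (Q.map f) (R.map f))^[j] (q.map f) :=
  Function.Semiconj.iterate_right
    (fun p => by simp [twistedDeriv, derivative_map]) j q

theorem natDegree_twistedDeriv_iterate_le {Q R q : A[X]} {h k : ℕ} (hQ : Q.natDegree ≤ h)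
    (hR : R.natDegree ≤ h) (hq : q.natDegree ≤ k) (j : ℕ) :
    ((twistedDeriv Q R)^[j] q).natDegree ≤ k + j * h := by
  induction j with
  | zero => simpa using hq
  | succ j ih =>
    rw [Function.iterate_succ_apply', twistedDeriv]
    have hderiv := natDegree_derivative_le ((twistedDeriv Q R)^[j] q)
    refine (natDegree_add_le_of_degree_le (natDegree_mul_le_of_le hQ (hderiv.trans ?_))
      (natDegree_mul_le_of_le hR ih)).trans (by lia : h + (k + j * h) ≤ _)
    lia

theorem mul_derivative_sum_twistedDeriv_iterate_mul (Q : A[X]) (R q y : ι → A[X]) (j : ℕ) :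
    Q * derivative (∑ i, (twistedDeriv Q (R i))^[j] (q i) * y i) =
      ∑ i, (twistedDeriv Q (R i))^[j + 1] (q i) * y i +
        ∑ i, (twistedDeriv Q (R i))^[j] (q i) * twistedDeriv Q (-R i) (y i) := by
  rw [derivative_sum, mul_sum, ← sum_add_distrib]
  refine sum_congr rfl fun i _ => ?_
  simp only [Function.iterate_succ_apply', twistedDeriv, derivative_mul]
  ring

theorem twistedDeriv_prod (Q : A[X]) (R w : ι → A[X]) :
    twistedDeriv Q (∑ i, R i) (∏ i, w i) =
      ∑ i, (∏ k ∈ univ.erase i, w k) * twistedDeriv Q (R i) (w i) := by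
  rw [twistedDeriv, derivative_prod_finset, mul_sum, sum_mul, ← sum_add_distrib]
  refine sum_congr rfl fun i _ => ?_
  rw [← prod_erase_mul univ w (mem_univ i), twistedDeriv]
  ring

theorem twistedDeriv_det (Q : A[X]) (R : ι → A[X]) (M : Matrix ι ι A[X]) :
    twistedDeriv Q (∑ b, R b) M.det =
      ∑ c, (M.updateRow c fun b => twistedDeriv Q (R b) (M c b)).det := by
  have hrow (σ : Equiv.Perm ι) :
      ∑ c, ∏ b, M.updateRow c (fun b => twistedDeriv Q (R b) (M c b)) (σ b) b =
        twistedDeriv Q (∑ b, R b) (∏ b, M (σ b) b) := by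
    rw [twistedDeriv_prod, ← Equiv.sum_comp σ]
    refine sum_congr rfl fun c _ => ?_
    rw [← prod_erase_mul univ _ (mem_univ c), Matrix.updateRow_self]
    congr 1
    refine prod_congr rfl fun b hb => ?_
    rw [Matrix.updateRow_ne (σ.injective.ne (ne_of_mem_erase hb))]
  have hlin (w : Equiv.Perm ι → A[X]) :
      twistedDeriv Q (∑ b, R b) (∑ σ, (Equiv.Perm.sign σ : ℤ) * w σ) =
        ∑ σ, ((Equiv.Perm.sign σ : ℤ) : A[X]) * twistedDeriv Q (∑ b, R b) (w σ) := by
    simp only [twistedDeriv, derivative_sum, derivative_mul, derivative_intCast, zero_mul, zero_add,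
      mul_sum, ← sum_add_distrib, mul_add, mul_left_comm]
  simp only [Matrix.det_apply', hlin, ← hrow, mul_sum]
  exact sum_comm

/-- The Wronskian-type matrix whose row `a` consists of the `idx a`-th twisted derivatives.
It is singular wherever the twisted derivatives of the `q b` satisfy a common linear relation. -/
noncomputable def twistedWronskian (Q : A[X]) (R q : ι → A[X]) (idx : ι → ℕ) : Matrix ι ι A[X] :=
  Matrix.of fun a b => (twistedDeriv Q (R b))^[idx a] (q b)

theorem twistedDeriv_det_twistedWronskian (Q : A[X]) (R q : ι → A[X]) (idx : ι → ℕ) :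
    twistedDeriv Q (∑ b, R b) (twistedWronskian Q R q idx).det =
      ∑ c, (twistedWronskian Q R q (Function.update idx c (idx c + 1))).det := by
  rw [twistedDeriv_det]
  refine sum_congr rfl fun c _ => congrArg Matrix.det ?_
  ext1 a b
  obtain rfl | hac := eq_or_ne a c
  · simp [twistedWronskian, ← Function.iterate_succ_apply']
  · simp [twistedWronskian, Matrix.updateRow_ne hac, Function.update_of_ne hac]

theorem natDegree_det_le {M : Matrix ι ι A[X]} {d : ℕ} (hM : ∀ a b, (M a b).natDegree ≤ d) :
    M.det.natDegree ≤ Fintype.card ι * d := by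
  rw [Matrix.det_apply]
  refine natDegree_sum_le_of_forall_le _ _ fun σ _ => (natDegree_smul_le _ _).trans ?_
  refine (natDegree_prod_le _ _).trans ((sum_le_card_nsmul _ _ d fun b _ => hM _ _).trans ?_)
  simp

theorem X_pow_dvd_sum_twistedDeriv_iterate {Q : A[X]} {R q : ι → A[X]} {F : ι → PowerSeries A}
    (hF : ∀ i, (Q : PowerSeries A) * PowerSeries.derivative A (F i) = R i * F i) {M : ℕ}
    (hq : PowerSeries.X ^ M ∣ ∑ i, (q i : PowerSeries A) * F i) (j : ℕ) :
    PowerSeries.X ^ (M - j) ∣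
      ∑ i, (((twistedDeriv Q (R i))^[j] (q i) : A[X]) : PowerSeries A) * F i := by
  induction j with
  | zero => exact hq
  | succ j ih =>
    have hderiv : ∑ i, (((twistedDeriv Q (R i))^[j + 1] (q i) : A[X]) : PowerSeries A) * F i =
        Q * PowerSeries.derivative A
          (∑ i, (((twistedDeriv Q (R i))^[j] (q i) : A[X]) : PowerSeries A) * F i) := by
      rw [map_sum, mul_sum]
      refine sum_congr rfl fun i _ => ?_
      rw [Function.iterate_succ_apply', twistedDeriv, Derivation.leibniz,
        PowerSeries.derivative_coe, Polynomial.coe_add, Polynomial.coe_mul, Polynomial.coe_mul,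
        smul_eq_mul, smul_eq_mul]
      linear_combination -(((twistedDeriv Q (R i))^[j] (q i) : A[X]) : PowerSeries A) * hF i
    rw [hderiv]
    refine Dvd.dvd.mul_left (PowerSeries.X_pow_dvd_iff.mpr fun m hm => ?_) _
    rw [PowerSeries.coeff_derivative, PowerSeries.X_pow_dvd_iff.mp ih (m + 1) (by lia), zero_mul]

end TwistedDerivative

section LogarithmicDerivative

variable {K : Type*} [Field K]

/-- The rational function `R / Q` is the logarithmic derivative of a rational function `u / v`,
with denominators cleared. -/
def IsLogDeriv (Q R : K[X]) : Prop :=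
  ∃ u v : K[X], u ≠ 0 ∧ v ≠ 0 ∧
    Q * (v * derivative u - derivative v * u) = R * (u * v)

theorem IsLogDeriv.neg {Q R : K[X]} (h : IsLogDeriv Q R) : IsLogDeriv Q (-R) := by
  obtain ⟨u, v, hu, hv, h⟩ := h
  exact ⟨v, u, hv, hu, by linear_combination -h⟩

theorem X_sub_C_mul_derivative_X_sub_C_pow_mul (s : K) (a : ℕ) (u : K[X]) :
    (X - C s) * derivative ((X - C s) ^ a * u) =
      (X - C s) ^ a * ((a : K[X]) * u + (X - C s) * derivative u) := by
  cases a with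
  | zero => simp
  | succ a =>
    rw [derivative_mul, derivative_X_sub_C_pow]
    simp only [Nat.add_sub_cancel, map_natCast]
    ring

theorem IsLogDeriv.exists_eval_eq_intCast_mul {Q R : K[X]} (h : IsLogDeriv Q R) {s : K}
    (hs : Q.eval s = 0) : ∃ m : ℤ, R.eval s = m * (derivative Q).eval s := by
  obtain ⟨u, v, hu, hv, h⟩ := h
  obtain ⟨Q₁, rfl⟩ := dvd_iff_isRoot.mpr hs
  obtain ⟨u₀, hu₀, hus⟩ := exists_eq_pow_rootMultiplicity_mul_and_not_dvd u hu s
  obtain ⟨v₀, hv₀, hvs⟩ := exists_eq_pow_rootMultiplicity_mul_and_not_dvd v hv s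
  rw [dvd_iff_isRoot, IsRoot] at hus hvs
  generalize rootMultiplicity s u = a at hu₀
  generalize rootMultiplicity s v = b at hv₀
  subst hu₀ hv₀
  have hlocal : Q₁ * (((a : K[X]) - (b : K[X])) * u₀ * v₀ +
      (X - C s) * (v₀ * derivative u₀ - derivative v₀ * u₀)) = R * (u₀ * v₀) := by
    refine mul_left_cancel₀ (pow_ne_zero (a + b) (X_sub_C_ne_zero s)) ?_
    linear_combination h - Q₁ * (X - C s) ^ b * v₀ * X_sub_C_mul_derivative_X_sub_C_pow_mul s a u₀ +
      Q₁ * (X - C s) ^ a * u₀ * X_sub_C_mul_derivative_X_sub_C_pow_mul s b v₀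
  have heval := congrArg (eval s) hlocal
  simp only [eval_mul, eval_add, eval_sub, eval_natCast, eval_X, eval_C, sub_self, zero_mul,
    add_zero] at heval
  refine ⟨a - b, mul_right_cancel₀ (mul_ne_zero hus hvs) ?_⟩
  simp only [derivative_mul, derivative_sub, derivative_X, derivative_C, eval_add, eval_mul,
    eval_sub, eval_X, eval_C, eval_zero, eval_one, sub_self, zero_mul]
  push_cast
  linear_combination -heval

end LogarithmicDerivative

section WronskianZeros

variable {K ι : Type*} [Field K] [Fintype ι] {Q : K[X]} {R q : ι → K[X]}

theorem X_sub_C_pow_succ_dvd_of_dvd_derivative [CharZero K] {s : K} {p : K[X]} {m : ℕ}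
    (hs : p.eval s = 0) (h : (X - C s) ^ m ∣ derivative p) : (X - C s) ^ (m + 1) ∣ p := by
  obtain rfl | hp := eq_or_ne p 0
  · exact dvd_zero _
  have hderiv : derivative p ≠ 0 := fun h0 => by
    have hconst := eq_C_of_natDegree_eq_zero (derivative_eq_zero.mp h0)
    rw [hconst, eval_C] at hs
    exact hp (by rw [hconst, hs, C_0])
  have hroot := derivative_rootMultiplicity_of_root (show p.IsRoot s from hs)
  have hpos := (rootMultiplicity_pos hp).mpr hs
  have hm := (le_rootMultiplicity_iff hderiv).mpr h
  exact (le_rootMultiplicity_iff hp).mp (by lia)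

theorem X_sub_C_pow_dvd_det_twistedWronskian [CharZero K] {s : K} (hQ : Q.eval s ≠ 0)
    {v : ι → K} (hv : v ≠ 0) {N : ℕ}
    (hker : ∀ j < N, ∑ i, ((twistedDeriv Q (R i))^[j] (q i)).eval s * v i = 0) (m : ℕ)
    (idx : ι → ℕ) (hidx : ∀ i, idx i + m ≤ N) :
    (X - C s) ^ m ∣ (twistedWronskian Q R q idx).det := by
  induction m generalizing idx with
  | zero => simp
  | succ m ih =>
    refine X_sub_C_pow_succ_dvd_of_dvd_derivative ?_ ?_
    · rw [← coe_evalRingHom, RingHom.map_det]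
      refine Matrix.exists_mulVec_eq_zero_iff.mp ⟨v, hv, funext fun a => ?_⟩
      simpa [twistedWronskian, Matrix.mulVec, dotProduct] using
        hker (idx a) (by have := hidx a; lia)
    · have hdvd : (X - C s) ^ m ∣
          twistedDeriv Q (∑ b, R b) (twistedWronskian Q R q idx).det := by
        rw [twistedDeriv_det_twistedWronskian]
        refine dvd_sum fun c _ => ih _ fun i => ?_
        have := hidx i
        rw [Function.update_apply]
        split_ifs with hic <;> [subst hic; skip] <;> lia
      have hcop : IsCoprime ((X - C s) ^ m) Q :=
        ((irreducible_X_sub_C s).coprime_iff_not_dvd.mpr (mt dvd_iff_isRoot.mp hQ)).pow_left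
      refine hcop.dvd_of_dvd_mul_left ((dvd_add_left ?_).mp hdvd)
      exact (ih idx fun i => by have := hidx i; lia).mul_left _

/-- Eliminating one coordinate `i₀` of a relation `y` among the twisted derivatives produces, by
differentiation, a relation of smaller support that is valid for one derivative less. -/
theorem eq_zero_of_sum_twistedDeriv_mul_eq_zero (hq : ∀ i, q i ≠ 0)
    (hsep : Pairwise fun i i' => ¬ IsLogDeriv Q (R i - R i')) (m : ℕ) (y : ι → K[X])
    (hcard : #{i | y i ≠ 0} ≤ m)
    (hy : ∀ j < m, ∑ i, (twistedDeriv Q (R i))^[j] (q i) * y i = 0) : y = 0 := by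
  induction m generalizing y with
  | zero =>
    rw [Nat.le_zero, card_eq_zero, filter_eq_empty_iff] at hcard
    exact funext fun i => not_not.mp (hcard (mem_univ i))
  | succ m ih =>
    by_contra hne
    obtain ⟨i₀, hi₀⟩ := Function.ne_iff.mp hne
    let D (i : ι) : K[X] := twistedDeriv Q (-R i) (y i)
    let z (i : ι) : K[X] := y i₀ * D i - D i₀ * y i
    have hDy (j : ℕ) (hj : j < m) : ∑ i, (twistedDeriv Q (R i))^[j] (q i) * D i = 0 := by
      have hsum := mul_derivative_sum_twistedDeriv_iterate_mul Q R q y j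
      rwa [hy j (by lia), hy (j + 1) (by lia), derivative_zero, mul_zero, zero_add, eq_comm] at hsum
    have hz : z = 0 := by
      refine ih z ?_ fun j hj => ?_
      · have hsub : ({i | z i ≠ 0} : Finset ι) ⊆ ({i | y i ≠ 0} : Finset ι).erase i₀ := by
          intro i hi
          simp only [mem_erase, mem_filter, mem_univ, true_and] at hi ⊢
          refine ⟨?_, fun h0 => hi (by simp [z, D, twistedDeriv, h0])⟩
          rintro rfl
          exact hi (by simp only [z]; ring)
        have := card_le_card hsub
        rw [card_erase_of_mem (by simpa using hi₀)] at this
        lia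
      · simp only [z, mul_sub, mul_left_comm _ (y i₀), mul_left_comm _ (D i₀), sum_sub_distrib,
          ← mul_sum, hDy j hj, hy j (by lia), mul_zero, sub_zero]
    have hsupp (i : ι) (hi : i ≠ i₀) : y i = 0 := by
      by_contra hyi
      have hzi : z i = 0 := congrFun hz i
      exact hsep hi ⟨y i, y i₀, hyi, hi₀, by
        simp only [z, D, twistedDeriv] at hzi
        linear_combination hzi⟩
    have h0 := hy 0 (by lia)
    rw [sum_eq_single i₀ (fun i _ hi => by rw [hsupp i hi, mul_zero]) (by simp)] at h0
    exact mul_ne_zero (hq i₀) hi₀ h0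

theorem det_twistedWronskian_ne_zero (hq : ∀ i, q i ≠ 0)
    (hsep : Pairwise fun i i' => ¬ IsLogDeriv Q (R i - R i')) :
    (twistedWronskian Q R q fun a => Fintype.equivFin ι a).det ≠ 0 := by
  intro hdet
  obtain ⟨y, hy, hmul⟩ := Matrix.exists_mulVec_eq_zero_iff.mpr hdet
  refine hy (eq_zero_of_sum_twistedDeriv_mul_eq_zero hq hsep _ y (card_le_univ _) fun j hj => ?_)
  simpa [twistedWronskian, Matrix.mulVec, dotProduct] using
    congrFun hmul ((Fintype.equivFin ι).symm ⟨j, hj⟩)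

theorem card_mul_le_natDegree {p : K[X]} (hp : p ≠ 0) (S : Finset K) {m : ℕ}
    (hS : ∀ s ∈ S, (X - C s) ^ m ∣ p) : #S * m ≤ p.natDegree := by
  have hdvd : ∏ s ∈ S, (X - C s) ^ m ∣ p :=
    Finset.prod_dvd_of_coprime (fun s _ t _ hst => (pairwise_coprime_X_sub_C
      Function.injective_id hst).pow) hS
  have hdeg := natDegree_le_of_dvd hdvd hp
  rwa [prod_pow, natDegree_pow, natDegree_prod_of_monic _ _ fun s _ => monic_X_sub_C s,
    sum_congr rfl fun s _ => natDegree_X_sub_C s, sum_const, smul_eq_mul, mul_one,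
    mul_comm] at hdeg

theorem card_mul_le_of_forall_sum_twistedDeriv_eq_zero [CharZero K] {h k m N : ℕ}
    (hQ : Q.natDegree ≤ h) (hR : ∀ i, (R i).natDegree ≤ h)
    (hdeg : ∀ i, (q i).natDegree ≤ k) (hq : ∀ i, q i ≠ 0)
    (hsep : Pairwise fun i i' => ¬ IsLogDeriv Q (R i - R i')) (hm : Fintype.card ι + m ≤ N + 1)
    (S : Finset K) (hS : ∀ s ∈ S, Q.eval s ≠ 0 ∧ ∃ v : ι → K, v ≠ 0 ∧
      ∀ j < N, ∑ i, ((twistedDeriv Q (R i))^[j] (q i)).eval s * v i = 0) :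
    #S * m ≤ Fintype.card ι * (k + Fintype.card ι * h) := by
  have hidx (i : ι) : (Fintype.equivFin ι i : ℕ) < Fintype.card ι := (Fintype.equivFin ι i).isLt
  refine (card_mul_le_natDegree (det_twistedWronskian_ne_zero hq hsep) S fun s hs => ?_).trans
    (natDegree_det_le fun a b => ?_)
  · obtain ⟨hQs, v, hv, hker⟩ := hS s hs
    exact X_sub_C_pow_dvd_det_twistedWronskian hQs hv hker m _ fun i => by have := hidx i; lia
  · exact (natDegree_twistedDeriv_iterate_le hQ (hR b) (hdeg b) _).trans
      (by have := hidx a; gcongr)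

/-- The indices `i` with `q i = 0` contribute nothing and are discarded. -/
theorem card_mul_le_of_ne_zero [CharZero K] {h k m N : ℕ} (hQ : Q.natDegree ≤ h)
    (hR : ∀ i, (R i).natDegree ≤ h) (hdeg : ∀ i, (q i).natDegree ≤ k) (hq : q ≠ 0)
    (hsep : Pairwise fun i i' => ¬ IsLogDeriv Q (R i - R i')) (hm : Fintype.card ι + m ≤ N + 1)
    (S : Finset K) (hS : ∀ s ∈ S, Q.eval s ≠ 0 ∧ ∃ v : ι → K, (∀ i, v i ≠ 0) ∧
      ∀ j < N, ∑ i, ((twistedDeriv Q (R i))^[j] (q i)).eval s * v i = 0) :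
    #S * m ≤ Fintype.card ι * (k + Fintype.card ι * h) := by
  obtain ⟨i₀, hi₀⟩ := Function.ne_iff.mp hq
  have hcard : Fintype.card {i // q i ≠ 0} ≤ Fintype.card ι := Fintype.card_subtype_le _
  refine (card_mul_le_of_forall_sum_twistedDeriv_eq_zero (ι := {i // q i ≠ 0}) (N := N) (m := m)
    (R := fun i => R i) (q := fun i => q i) hQ (fun i => hR i) (fun i => hdeg i) (fun i => i.2)
    (fun i i' h => hsep (Subtype.coe_injective.ne h)) (by lia) S fun s hs => ?_).trans (by gcongr)
  obtain ⟨hQs, v, hv, hker⟩ := hS s hs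
  refine ⟨hQs, fun i => v i, Function.ne_iff.mpr ⟨⟨i₀, hi₀⟩, hv i₀⟩, fun j hj => ?_⟩
  rw [← hker j hj]
  exact (sum_subtype {i | q i ≠ 0} (by simp) fun i =>
    ((twistedDeriv Q (R i))^[j] (q i)).eval s * v i).symm.trans
      (sum_filter_of_ne fun i _ h h0 => h (by
        rw [h0, twistedDeriv_iterate_zero, eval_zero, zero_mul]))

end WronskianZeros

section FactorialRatio

/-- The polynomial `∏ (1 + 4jX)`, `1 ≤ j ≤ e`, whose value at `1 / (4n)` is `(n + e)! / (n! n ^ e)`.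
The factor `4` gives its square root integral power series coefficients. -/
noncomputable def ratioPoly (A : Type*) [CommRing A] (e : ℕ) : A[X] :=
  ∏ j ∈ Icc 1 e, (1 + C (4 * (j : A)) * X)

/-- The polynomial `Pₕ Pₑ' / (2 Pₑ)` for `P = ratioPoly A` and `e ≤ h`, so that `√Pₑ` solves
`Pₕ F' = sqrtOdeCoeff A h e * F`. -/
noncomputable def sqrtOdeCoeff (A : Type*) [CommRing A] (h e : ℕ) : A[X] :=
  ∑ j ∈ Icc 1 e, C (2 * (j : A)) * ∏ l ∈ (Icc 1 h).erase j, (1 + C (4 * (l : A)) * X)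

section CommRing

variable {A : Type*} [CommRing A]

theorem map_ratioPoly {B : Type*} [CommRing B] (f : A →+* B) (e : ℕ) :
    (ratioPoly A e).map f = ratioPoly B e := by
  simp only [ratioPoly, Polynomial.map_prod, Polynomial.map_add, Polynomial.map_one,
    Polynomial.map_mul, map_X, map_mul, map_ofNat, map_natCast, Polynomial.map_ofNat,
    Polynomial.map_natCast]

theorem map_sqrtOdeCoeff {B : Type*} [CommRing B] (f : A →+* B) (h e : ℕ) :
    (sqrtOdeCoeff A h e).map f = sqrtOdeCoeff B h e := by
  simp only [sqrtOdeCoeff, Polynomial.map_sum, Polynomial.map_prod, Polynomial.map_add,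
    Polynomial.map_one, Polynomial.map_mul, map_X, map_mul, map_ofNat, map_natCast,
    Polynomial.map_ofNat, Polynomial.map_natCast]

theorem natDegree_one_add_C_mul_X_le (a : A) : (1 + C a * X).natDegree ≤ 1 := by
  compute_degree

theorem natDegree_prod_one_add_C_mul_X_le (s : Finset ℕ) :
    (∏ l ∈ s, (1 + C (4 * (l : A)) * X)).natDegree ≤ #s := by
  refine (natDegree_prod_le _ _).trans ?_
  simpa using sum_le_card_nsmul s _ 1 fun l _ => natDegree_one_add_C_mul_X_le (4 * (l : A))

theorem natDegree_ratioPoly_le (e : ℕ) : (ratioPoly A e).natDegree ≤ e :=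
  (natDegree_prod_one_add_C_mul_X_le _).trans (by simp)

theorem natDegree_sqrtOdeCoeff_le (h e : ℕ) : (sqrtOdeCoeff A h e).natDegree ≤ h := by
  refine natDegree_sum_le_of_forall_le _ _ fun j _ => (natDegree_C_mul_le _ _).trans ?_
  exact (natDegree_prod_one_add_C_mul_X_le _).trans ((card_erase_le).trans (by simp))

theorem two_mul_sqrtOdeCoeff_mul_ratioPoly {h e : ℕ} (he : e ≤ h) :
    2 * sqrtOdeCoeff A h e * ratioPoly A e = ratioPoly A h * derivative (ratioPoly A e) := by
  rw [sqrtOdeCoeff, mul_sum, sum_mul]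
  conv_rhs => rw [ratioPoly, ratioPoly, derivative_prod_finset, mul_sum]
  refine sum_congr rfl fun j hj => ?_
  have hjh : j ∈ Icc 1 h := Icc_subset_Icc_right he hj
  rw [ratioPoly, ← mul_prod_erase _ _ hj, ← mul_prod_erase _ _ hjh]
  simp only [derivative_add, derivative_one, derivative_C_mul, derivative_X, zero_add, mul_one]
  rw [show (C (4 * (j : A)) : A[X]) = 2 * C (2 * (j : A)) by simp only [map_mul, map_ofNat]; ring]
  ring

theorem ratioPoly_succ (e : ℕ) :
    ratioPoly A (e + 1) = ratioPoly A e * (1 + C (4 * ((e + 1 : ℕ) : A)) * X) :=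
  prod_Icc_succ_top (by lia) _

end CommRing

theorem one_le_eval_ratioPoly {s : ℝ} (hs : 0 ≤ s) (e : ℕ) : 1 ≤ (ratioPoly ℝ e).eval s := by
  rw [ratioPoly, eval_prod]
  refine Finset.one_le_prod fun j _ => ?_
  simp only [eval_add, eval_one, eval_mul, eval_C, eval_X]
  exact le_add_of_nonneg_right (by positivity)

variable {K : Type*} [Field K] [CharZero K]

theorem factorial_add_eq_mul_eval_ratioPoly {n : ℕ} (hn : n ≠ 0) (e : ℕ) :
    ((n + e)! : K) = n ! * n ^ e * (ratioPoly K e).eval (4 * (n : K))⁻¹ := by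
  induction e with
  | zero => simp [ratioPoly]
  | succ e ih =>
    have hn' : (n : K) ≠ 0 := Nat.cast_ne_zero.mpr hn
    rw [← add_assoc, Nat.factorial_succ, ratioPoly_succ, eval_mul, Nat.cast_mul, ih]
    simp only [eval_add, eval_one, eval_mul, eval_C, eval_X]
    push_cast
    field_simp
    ring

theorem eval_one_add_C_mul_X_ne_zero {e l : ℕ} (he : e ≠ 0) (hle : l ≠ e) :
    (1 + C (4 * (l : K)) * X).eval (-(4 * (e : K))⁻¹) ≠ 0 := by
  have he' : (e : K) ≠ 0 := Nat.cast_ne_zero.mpr he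
  intro h
  simp only [eval_add, eval_one, eval_mul, eval_C, eval_X] at h
  field_simp at h
  exact hle (Nat.cast_injective (R := K) (by linear_combination -h))

theorem eval_ratioPoly_ne_zero {e h : ℕ} (he : h < e) :
    (ratioPoly K h).eval (-(4 * (e : K))⁻¹) ≠ 0 := by
  rw [ratioPoly, eval_prod, prod_ne_zero_iff]
  exact fun l hl => eval_one_add_C_mul_X_ne_zero (by lia) (by have := mem_Icc.mp hl; lia)

theorem eval_ratioPoly_eq_zero_and_derivative_ne_zero {e h : ℕ} (he : e ∈ Icc 1 h) :
    (ratioPoly K h).eval (-(4 * (e : K))⁻¹) = 0 ∧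
      (derivative (ratioPoly K h)).eval (-(4 * (e : K))⁻¹) ≠ 0 := by
  have he₀ : e ≠ 0 := by have := mem_Icc.mp he; lia
  have he' : (e : K) ≠ 0 := Nat.cast_ne_zero.mpr he₀
  have hroot : (1 + C (4 * (e : K)) * X).eval (-(4 * (e : K))⁻¹) = 0 := by
    simp only [eval_add, eval_one, eval_mul, eval_C, eval_X]
    field_simp
    ring
  rw [ratioPoly, ← mul_prod_erase _ _ he, derivative_mul]
  simp only [eval_mul, eval_add, hroot, zero_mul, add_zero, true_and]
  refine mul_ne_zero (by simp [he']) ?_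
  rw [eval_prod, prod_ne_zero_iff]
  exact fun l hl => eval_one_add_C_mul_X_ne_zero he₀ (ne_of_mem_erase hl)

theorem not_isLogDeriv_sqrtOdeCoeff_sub {h e e' : ℕ} (he : e ≤ h) (he' : e' ≤ h) (hne : e ≠ e') :
    ¬ IsLogDeriv (ratioPoly K h) (sqrtOdeCoeff K h e - sqrtOdeCoeff K h e') := by
  wlog hlt : e' < e generalizing e e'
  · exact fun hlog => this he' he hne.symm (by lia) (by simpa using hlog.neg)
  intro hlog
  obtain ⟨hroot, hsimple⟩ :=
    eval_ratioPoly_eq_zero_and_derivative_ne_zero (K := K) (mem_Icc.mpr ⟨by lia, he⟩)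
  obtain ⟨heroot, hesimple⟩ :=
    eval_ratioPoly_eq_zero_and_derivative_ne_zero (K := K) (mem_Icc.mpr ⟨by lia, le_refl e⟩)
  have hne' := eval_ratioPoly_ne_zero (K := K) hlt
  set s : K := -(4 * (e : K))⁻¹
  have hres' : (sqrtOdeCoeff K h e').eval s = 0 := by
    have hode := congrArg (eval s) (two_mul_sqrtOdeCoeff_mul_ratioPoly (A := K) he')
    simpa [hroot, hne'] using hode
  have hres : 2 * (sqrtOdeCoeff K h e).eval s = (derivative (ratioPoly K h)).eval s := by
    have hode := congrArg (fun p => eval s (derivative p))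
      (two_mul_sqrtOdeCoeff_mul_ratioPoly (A := K) he)
    simp only [derivative_mul, eval_add, eval_mul, hroot, heroot, mul_zero, zero_mul, zero_add,
      add_zero, eval_ofNat, derivative_ofNat] at hode
    exact mul_right_cancel₀ hesimple hode
  obtain ⟨m, hm⟩ := hlog.exists_eval_eq_intCast_mul hroot
  have hcast : ((2 * m : ℤ) : K) = (1 : ℤ) := by
    rw [eval_sub, hres', sub_zero] at hm
    refine mul_right_cancel₀ hsimple ?_
    push_cast
    linear_combination hres - 2 * hm
  have := Int.cast_injective hcast
  lia

end FactorialRatio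

section SquareRootSeries

open PowerSeries (coeff rescale catalanSeries)

/-- The power series `√(1 + 4aX) = 1 + 2aX c(-aX)`, where `c` generates the Catalan numbers. -/
noncomputable def sqrtFactorSeries (a : ℕ) : PowerSeries ℤ :=
  1 + PowerSeries.C (2 * (a : ℤ)) *
    (PowerSeries.X * rescale (-(a : ℤ)) (catalanSeries.map (Nat.castRingHom ℤ)))

theorem sqrtFactorSeries_sq (a : ℕ) :
    sqrtFactorSeries a ^ 2 = 1 + PowerSeries.C (4 * (a : ℤ)) * PowerSeries.X := by
  have hcat := congrArg (fun F => rescale (-(a : ℤ)) (PowerSeries.map (Nat.castRingHom ℤ) F))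
    PowerSeries.catalanSeries_sq_mul_X_add_one
  simp only [map_add, map_mul, map_pow, map_one, PowerSeries.map_X, PowerSeries.rescale_X,
    map_neg] at hcat
  simp only [sqrtFactorSeries, map_mul, map_ofNat]
  linear_combination (-4 * PowerSeries.C (a : ℤ) * PowerSeries.X) * hcat

theorem catalan_le_four_pow (m : ℕ) : catalan m ≤ 4 ^ m := by
  rw [catalan_eq_centralBinom_div]
  refine (Nat.div_le_self _ _).trans ((Nat.choose_le_two_pow _ _).trans_eq ?_)
  rw [pow_mul, Nat.pow_two]

theorem abs_coeff_sqrtFactorSeries_le (a m : ℕ) :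
    |coeff m (sqrtFactorSeries a)| ≤ (4 * (a : ℤ)) ^ m := by
  cases m with
  | zero => simp [sqrtFactorSeries]
  | succ m =>
    have hcat : (catalan m : ℤ) ≤ 4 ^ m := mod_cast catalan_le_four_pow m
    simp only [sqrtFactorSeries, map_add, PowerSeries.coeff_C_mul, PowerSeries.coeff_succ_X_mul,
      PowerSeries.coeff_one, Nat.succ_ne_zero, if_false, zero_add, PowerSeries.coeff_rescale,
      PowerSeries.coeff_map, PowerSeries.catalanSeries_coeff, abs_mul, abs_pow, abs_neg,
      eq_natCast, Nat.abs_cast, abs_two]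
    calc 2 * (a : ℤ) * (a ^ m * catalan m) ≤ 4 * a * (a ^ m * 4 ^ m) := by gcongr; norm_num
      _ = (4 * (a : ℤ)) ^ (m + 1) := by ring

theorem abs_coeff_prod_le {ι A : Type*} [CommRing A] [LinearOrder A] [IsStrictOrderedRing A]
    (s : Finset ι) {G : ι → PowerSeries A} {b : ι → A} (hb : ∀ j ∈ s, 0 ≤ b j)
    (hG : ∀ j ∈ s, ∀ m, |coeff m (G j)| ≤ b j ^ m) (m : ℕ) :
    |coeff m (∏ j ∈ s, G j)| ≤ (∑ j ∈ s, b j) ^ m := by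
  induction s using Finset.induction_on generalizing m with
  | empty => cases m <;> simp [PowerSeries.coeff_one]
  | insert j s hj ih =>
    have hb' : ∀ i ∈ s, 0 ≤ b i := fun i hi => hb i (mem_insert_of_mem hi)
    have hbj : 0 ≤ b j := hb j (mem_insert_self _ _)
    rw [prod_insert hj, sum_insert hj, PowerSeries.coeff_mul,
      (Commute.all (b j) _).add_pow']
    refine (abs_sum_le_sum_abs _ _).trans (sum_le_sum fun p hp => ?_)
    have hchoose : 1 ≤ m.choose p.1 :=
      Nat.choose_pos (by have := HasAntidiagonal.mem_antidiagonal.mp hp; lia)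
    have hpos : 0 ≤ b j ^ p.1 * (∑ i ∈ s, b i) ^ p.2 :=
      mul_nonneg (pow_nonneg hbj _) (pow_nonneg (sum_nonneg hb') _)
    rw [abs_mul, nsmul_eq_mul]
    calc |coeff p.1 (G j)| * |coeff p.2 (∏ i ∈ s, G i)|
        ≤ b j ^ p.1 * (∑ i ∈ s, b i) ^ p.2 :=
          mul_le_mul (hG j (mem_insert_self _ _) _)
            (ih hb' (fun i hi => hG i (mem_insert_of_mem hi)) _) (abs_nonneg _)
            (pow_nonneg hbj _)
      _ ≤ m.choose p.1 * (b j ^ p.1 * (∑ i ∈ s, b i) ^ p.2) :=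
          le_mul_of_one_le_left hpos (mod_cast hchoose)

/-- The power series `√(ratioPoly ℤ e)` with constant coefficient `1`. -/
noncomputable def sqrtSeries (e : ℕ) : PowerSeries ℤ :=
  ∏ j ∈ Icc 1 e, sqrtFactorSeries j

theorem sqrtSeries_sq (e : ℕ) : sqrtSeries e ^ 2 = (ratioPoly ℤ e : PowerSeries ℤ) := by
  rw [sqrtSeries, ← prod_pow, ratioPoly, ← coeToPowerSeries.ringHom_apply, map_prod]
  refine prod_congr rfl fun j _ => ?_
  rw [sqrtFactorSeries_sq, coeToPowerSeries.ringHom_apply, Polynomial.coe_add, Polynomial.coe_mul,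
    Polynomial.coe_C, Polynomial.coe_X, Polynomial.coe_one]

theorem sqrtSeries_ne_zero (e : ℕ) : sqrtSeries e ≠ 0 := by
  refine fun h => one_ne_zero (α := ℤ) ?_
  have h0 := congrArg PowerSeries.constantCoeff h
  rw [sqrtSeries, map_prod, map_zero] at h0
  rw [← h0]
  exact (prod_eq_one fun j _ => by simp [sqrtFactorSeries]).symm

theorem abs_coeff_sqrtSeries_le {e h : ℕ} (he : e ≤ h) (m : ℕ) :
    |coeff m (sqrtSeries e)| ≤ (4 * (h : ℤ) ^ 2) ^ m := by
  refine (abs_coeff_prod_le _ (b := fun j : ℕ => 4 * (j : ℤ)) (fun j _ => by positivity)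
    (fun j _ => abs_coeff_sqrtFactorSeries_le j) m).trans ?_
  have hsum : ∑ j ∈ Icc 1 e, 4 * (j : ℤ) ≤ #(Icc 1 e) • (4 * (h : ℤ)) :=
    sum_le_card_nsmul _ _ _ fun j hj => by have := mem_Icc.mp hj; gcongr; lia
  gcongr
  refine hsum.trans ?_
  rw [Nat.card_Icc, Nat.add_sub_cancel, nsmul_eq_mul]
  have : (e : ℤ) ≤ h := mod_cast he
  nlinarith [Int.natCast_nonneg h]

theorem ratioPoly_mul_derivative_sqrtSeries {h e : ℕ} (he : e ≤ h) :
    (ratioPoly ℤ h : PowerSeries ℤ) * PowerSeries.derivative ℤ (sqrtSeries e) =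
      (sqrtOdeCoeff ℤ h e : PowerSeries ℤ) * sqrtSeries e := by
  have hsq := congrArg (PowerSeries.derivative ℤ) (sqrtSeries_sq e)
  rw [PowerSeries.derivative_coe, PowerSeries.derivative_pow, Nat.add_one_sub_one, pow_one,
    Nat.cast_ofNat] at hsq
  have hode := congrArg (coeToPowerSeries.ringHom (R := ℤ)) (two_mul_sqrtOdeCoeff_mul_ratioPoly he)
  simp only [map_mul, map_ofNat, coeToPowerSeries.ringHom_apply, ← hsq, ← sqrtSeries_sq e] at hode
  have htwo : (2 : PowerSeries ℤ) ≠ 0 := fun h =>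
    two_ne_zero (α := ℤ)
      ((map_ofNat _ 2).symm.trans ((congrArg PowerSeries.constantCoeff h).trans (map_zero _)))
  refine mul_left_cancel₀ (mul_ne_zero htwo (sqrtSeries_ne_zero e)) ?_
  linear_combination -hode

end SquareRootSeries

section Length

/-- The length of a polynomial: the sum of the norms of its coefficients. -/
noncomputable def length {A : Type*} [SeminormedCommRing A] (p : A[X]) : ℝ :=
  p.sum fun _ a => ‖a‖

variable {A : Type*} [SeminormedCommRing A]

theorem length_nonneg (p : A[X]) : 0 ≤ length p :=
  sum_nonneg fun _ _ => norm_nonneg _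

theorem length_eq_sum {p : A[X]} {s : Finset ℕ} (hs : p.support ⊆ s) :
    length p = ∑ m ∈ s, ‖p.coeff m‖ :=
  sum_eq_of_subset _ (fun _ => norm_zero) hs

theorem length_zero : length (0 : A[X]) = 0 := sum_zero_index _

theorem length_monomial (m : ℕ) (a : A) : length (monomial m a) = ‖a‖ :=
  sum_monomial_index a _ norm_zero

theorem length_C (a : A) : length (C a) = ‖a‖ := length_monomial 0 a

theorem length_add_le (p q : A[X]) : length (p + q) ≤ length p + length q := by
  rw [length_eq_sum (support_add (p := p) (q := q)), length_eq_sum (p := p) subset_union_left,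
    length_eq_sum (p := q) subset_union_right, ← sum_add_distrib]
  exact sum_le_sum fun m _ => by rw [coeff_add]; exact norm_add_le _ _

theorem length_sum_le {ι : Type*} (s : Finset ι) (f : ι → A[X]) :
    length (∑ i ∈ s, f i) ≤ ∑ i ∈ s, length (f i) :=
  le_sum_of_subadditive length length_zero.le length_add_le s f

theorem length_mul_le (p q : A[X]) : length (p * q) ≤ length p * length q := by
  rw [mul_eq_sum_sum]
  calc length (∑ i ∈ p.support, q.sum fun j b => monomial (i + j) (p.coeff i * b))
      ≤ ∑ i ∈ p.support, ∑ j ∈ q.support, length (monomial (i + j) (p.coeff i * q.coeff j)) :=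
        (length_sum_le _ _).trans (sum_le_sum fun i _ => length_sum_le _ _)
    _ ≤ ∑ i ∈ p.support, ∑ j ∈ q.support, ‖p.coeff i‖ * ‖q.coeff j‖ := by
        simp only [length_monomial]
        gcongr
        exact norm_mul_le _ _
    _ = length p * length q := (sum_mul_sum _ _ _ _).symm

theorem length_map_intCast (p : ℤ[X]) : length (p.map (Int.castRingHom ℝ)) = length p := by
  rw [length_eq_sum (support_map_subset _ _)]
  exact sum_congr rfl fun m _ => by rw [coeff_map, eq_intCast, Int.norm_cast_real]

theorem norm_eval_le_length [NormOneClass A] (p : A[X]) {s : A} (hs : ‖s‖ ≤ 1) :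
    ‖p.eval s‖ ≤ length p := by
  rw [eval_eq_sum]
  refine (norm_sum_le _ _).trans (sum_le_sum fun m _ => (norm_mul_le _ _).trans ?_)
  refine mul_le_of_le_one_right (norm_nonneg _) ((norm_pow_le _ _).trans ?_)
  exact pow_le_one₀ (norm_nonneg _) hs

theorem norm_coeff_coe_mul_le (p : A[X]) {F : PowerSeries A} {B : ℝ} (hB : 1 ≤ B)
    (hF : ∀ m, ‖PowerSeries.coeff m F‖ ≤ B ^ m) (m : ℕ) :
    ‖PowerSeries.coeff m ((p : PowerSeries A) * F)‖ ≤ length p * B ^ m := by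
  rw [PowerSeries.coeff_mul, Nat.sum_antidiagonal_eq_sum_range_succ_mk]
  refine (norm_sum_le _ _).trans ?_
  calc ∑ l ∈ range m.succ, ‖PowerSeries.coeff l (p : PowerSeries A) * PowerSeries.coeff (m - l) F‖
      ≤ ∑ l ∈ range m.succ, ‖p.coeff l‖ * B ^ m := by
        refine sum_le_sum fun l _ => (norm_mul_le _ _).trans ?_
        rw [coeff_coe]
        gcongr
        exact (hF _).trans (pow_le_pow_right₀ hB (Nat.sub_le m l))
    _ ≤ ∑ l ∈ p.support ∪ range m.succ, ‖p.coeff l‖ * B ^ m :=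
        sum_le_sum_of_subset_of_nonneg subset_union_right fun _ _ _ => by positivity
    _ = length p * B ^ m := by rw [← sum_mul, length_eq_sum subset_union_left]

variable [NormOneClass A]

theorem length_X_le : length (X : A[X]) ≤ 1 := (length_monomial 1 (1 : A)).trans_le norm_one.le

theorem length_prod_le {ι : Type*} (s : Finset ι) (f : ι → A[X]) :
    length (∏ i ∈ s, f i) ≤ ∏ i ∈ s, length (f i) := by
  induction s using Finset.induction_on with
  | empty => simpa using (length_C (1 : A)).le
  | insert i s hi ih =>
    rw [prod_insert hi, prod_insert hi]
    exact (length_mul_le _ _).trans (mul_le_mul_of_nonneg_left ih (length_nonneg _))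

theorem norm_mul_natCast_le (a : A) (m : ℕ) : ‖a * m‖ ≤ m * ‖a‖ := by
  rw [mul_comm (m : ℝ)]
  refine (norm_mul_le _ _).trans ?_
  gcongr
  simpa using Nat.norm_cast_le (α := A) m

theorem length_derivative_le {p : A[X]} {d : ℕ} (hd : p.natDegree ≤ d) :
    length (derivative p) ≤ d * length p := by
  rw [derivative_apply]
  calc length (p.sum fun m a => C (a * m) * X ^ (m - 1))
      ≤ ∑ m ∈ p.support, length (monomial (m - 1) (p.coeff m * m)) := by
        simp only [C_mul_X_pow_eq_monomial]
        exact length_sum_le _ _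
    _ ≤ ∑ m ∈ p.support, d * ‖p.coeff m‖ := by
        refine sum_le_sum fun m hm => ?_
        rw [length_monomial]
        refine (norm_mul_natCast_le _ _).trans ?_
        gcongr
        exact (le_natDegree_of_mem_supp m hm).trans hd
    _ = d * length p := (mul_sum _ _ _).symm

theorem length_prod_one_add_C_mul_X_le {h : ℕ} {s : Finset ℕ} (hs : s ⊆ Icc 1 h) :
    length (∏ l ∈ s, (1 + C (4 * (l : A)) * X)) ≤ (5 * h) ^ h := by
  have hfactor : ∀ l ∈ s, length (1 + C (4 * (l : A)) * X) ≤ 5 * h := by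
    intro l hl
    have hl' := mem_Icc.mp (hs hl)
    have hl₁ : (1 : ℝ) ≤ l := mod_cast hl'.1
    have hlh : (l : ℝ) ≤ h := mod_cast hl'.2
    have hcoeff : ‖4 * (l : A)‖ ≤ 4 * l := by simpa using Nat.norm_cast_le (α := A) (4 * l)
    calc length (1 + C (4 * (l : A)) * X)
        ≤ length (1 : A[X]) + length (C (4 * (l : A))) * length (X : A[X]) :=
          (length_add_le _ _).trans (by gcongr; exact length_mul_le _ _)
      _ ≤ 1 + 4 * l * 1 := by
          rw [← C_1, length_C, length_C, norm_one]
          gcongr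
          exacts [length_nonneg _, length_X_le]
      _ ≤ 5 * h := by linarith
  refine (length_prod_le _ _).trans ?_
  refine (prod_le_prod (fun _ _ => length_nonneg _) hfactor).trans ?_
  rw [prod_const]
  rcases Nat.eq_zero_or_pos h with rfl | hpos
  · simp [subset_empty.mp hs]
  · have hh : (1 : ℝ) ≤ h := mod_cast hpos
    exact pow_le_pow_right₀ (by linarith) (by simpa using card_le_card hs)

theorem length_ratioPoly_le (h : ℕ) : length (ratioPoly A h) ≤ (5 * h) ^ h :=
  length_prod_one_add_C_mul_X_le (Subset.refl _)

theorem length_sqrtOdeCoeff_le {h e : ℕ} (he : e ≤ h) :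
    length (sqrtOdeCoeff A h e) ≤ 2 * h ^ 2 * (5 * h) ^ h := by
  refine (length_sum_le _ _).trans ?_
  calc ∑ j ∈ Icc 1 e, length (C (2 * (j : A)) * ∏ l ∈ (Icc 1 h).erase j, (1 + C (4 * (l : A)) * X))
      ≤ ∑ j ∈ Icc 1 e, 2 * (h : ℝ) * (5 * h) ^ h := by
        refine sum_le_sum fun j hj => (length_mul_le _ _).trans ?_
        have hjh : (j : ℝ) ≤ h := mod_cast (mem_Icc.mp hj).2.trans he
        have hcoeff : ‖2 * (j : A)‖ ≤ 2 * j := by simpa using Nat.norm_cast_le (α := A) (2 * j)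
        refine mul_le_mul ?_ (length_prod_one_add_C_mul_X_le (erase_subset _ _))
          (length_nonneg _) (by positivity)
        rw [length_C]
        linarith
    _ = e * (2 * (h : ℝ) * (5 * h) ^ h) := by simp
    _ ≤ h * (2 * (h : ℝ) * (5 * h) ^ h) := by gcongr
    _ = 2 * h ^ 2 * (5 * h) ^ h := by ring

theorem length_twistedDeriv_le {Q R p : A[X]} {d : ℕ} (hd : p.natDegree ≤ d) :
    length (twistedDeriv Q R p) ≤ (d * length Q + length R) * length p := by
  calc length (twistedDeriv Q R p)
      ≤ length Q * length (derivative p) + length R * length p :=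
        (length_add_le _ _).trans (add_le_add (length_mul_le _ _) (length_mul_le _ _))
    _ ≤ length Q * (d * length p) + length R * length p := by
        gcongr
        exacts [length_nonneg _, length_derivative_le hd]
    _ = (d * length Q + length R) * length p := by ring

theorem length_twistedDeriv_iterate_le {Q R p : A[X]} {h k d j : ℕ} {Γ : ℝ}
    (hQ : Q.natDegree ≤ h) (hR : R.natDegree ≤ h) (hp : p.natDegree ≤ k)
    (hΓ : d * length Q + length R ≤ Γ) (hd : k + j * h ≤ d) :
    length ((twistedDeriv Q R)^[j] p) ≤ Γ ^ j * length p := by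
  induction j with
  | zero => simp
  | succ j ih =>
    have hdj : k + j * h ≤ d := le_trans (by gcongr; lia) hd
    rw [Function.iterate_succ_apply', pow_succ', mul_assoc]
    refine (length_twistedDeriv_le
      ((natDegree_twistedDeriv_iterate_le hQ hR hp j).trans hdj)).trans ?_
    have hnonneg : 0 ≤ d * length Q + length R :=
      add_nonneg (mul_nonneg d.cast_nonneg (length_nonneg _)) (length_nonneg _)
    exact mul_le_mul hΓ (ih hdj) (length_nonneg _) (hnonneg.trans hΓ)

end Length

section SeriesSum

open PowerSeries (coeff)

/-- The sum `∑ aₘ sᵐ` of a power series at `s`. It is the value of the function represented by the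
series only where the terms are summable. -/
noncomputable def seriesSum {A : Type*} [NormedCommRing A] (F : PowerSeries A) (s : A) : A :=
  ∑' m, coeff m F * s ^ m

variable {A : Type*} [NormedCommRing A] {s : A}

theorem coeff_mul_mul_pow (F G : PowerSeries A) (s : A) (m : ℕ) :
    coeff m (F * G) * s ^ m =
      ∑ x ∈ antidiagonal m, coeff x.1 F * s ^ x.1 * (coeff x.2 G * s ^ x.2) := by
  rw [PowerSeries.coeff_mul, sum_mul]
  refine sum_congr rfl fun x hx => ?_
  rw [← mem_antidiagonal.mp hx, pow_add]
  ring

theorem seriesSum_coe (p : A[X]) (s : A) : seriesSum (p : PowerSeries A) s = p.eval s := by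
  simp only [seriesSum, coeff_coe]
  rw [eval_eq_sum, Polynomial.sum]
  exact tsum_eq_sum fun m hm => by rw [notMem_support_iff.mp hm, zero_mul]

theorem summable_norm_coeff_coe_mul_pow (p : A[X]) (s : A) :
    Summable fun m => ‖coeff m (p : PowerSeries A) * s ^ m‖ :=
  summable_of_ne_finset_zero (s := p.support) fun m hm => by
    rw [coeff_coe, notMem_support_iff.mp hm, zero_mul, norm_zero]

theorem summable_norm_coeff_mul_mul_pow {F G : PowerSeries A}
    (hF : Summable fun m => ‖coeff m F * s ^ m‖) (hG : Summable fun m => ‖coeff m G * s ^ m‖) :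
    Summable fun m => ‖coeff m (F * G) * s ^ m‖ := by
  simpa only [coeff_mul_mul_pow] using summable_norm_sum_mul_antidiagonal_of_summable_norm hF hG

theorem norm_coeff_mul_pow_le [NormOneClass A] {F : PowerSeries A} {L B : ℝ} {m : ℕ}
    (hF : ‖coeff m F‖ ≤ L * B ^ m) : ‖coeff m F * s ^ m‖ ≤ L * (B * ‖s‖) ^ m := by
  rw [mul_pow, ← mul_assoc]
  exact (norm_mul_le _ _).trans (mul_le_mul hF (norm_pow_le s m) (norm_nonneg _)
    ((norm_nonneg _).trans hF))

theorem summable_norm_coeff_mul_pow [NormOneClass A] {F : PowerSeries A} {L B : ℝ} (hB : 0 ≤ B)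
    (hF : ∀ m, ‖coeff m F‖ ≤ L * B ^ m) (hs : B * ‖s‖ < 1) :
    Summable fun m => ‖coeff m F * s ^ m‖ :=
  .of_nonneg_of_le (fun _ => norm_nonneg _) (fun m => norm_coeff_mul_pow_le (hF m))
    ((summable_geometric_of_lt_one (by positivity) hs).mul_left L)

variable [CompleteSpace A]

theorem seriesSum_mul {F G : PowerSeries A} (hF : Summable fun m => ‖coeff m F * s ^ m‖)
    (hG : Summable fun m => ‖coeff m G * s ^ m‖) :
    seriesSum (F * G) s = seriesSum F s * seriesSum G s := by
  simp only [seriesSum, coeff_mul_mul_pow]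
  exact (tsum_mul_tsum_eq_tsum_sum_antidiagonal_of_summable_norm hF hG).symm

theorem seriesSum_sum {ι : Type*} (t : Finset ι) {F : ι → PowerSeries A}
    (hF : ∀ i ∈ t, Summable fun m => ‖coeff m (F i) * s ^ m‖) :
    seriesSum (∑ i ∈ t, F i) s = ∑ i ∈ t, seriesSum (F i) s := by
  simp only [seriesSum, map_sum, sum_mul]
  exact Summable.tsum_finsetSum fun i hi => (hF i hi).of_norm

theorem norm_seriesSum_le [NormOneClass A] {F : PowerSeries A} {L B : ℝ} {M : ℕ} (hB : 0 ≤ B)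
    (hF : ∀ m, ‖coeff m F‖ ≤ L * B ^ m) (hs : B * ‖s‖ ≤ 1 / 2) (hM : PowerSeries.X ^ M ∣ F) :
    ‖seriesSum F s‖ ≤ 2 * L * (B * ‖s‖) ^ M := by
  have hL : 0 ≤ L := by simpa using (norm_nonneg _).trans (hF 0)
  have hsum := (summable_norm_coeff_mul_pow hB hF (by linarith)).of_norm
  have hhead : ∑ m ∈ range M, coeff m F * s ^ m = 0 := sum_eq_zero fun m hm => by
    rw [PowerSeries.X_pow_dvd_iff.mp hM m (mem_range.mp hm), zero_mul]
  have htail : HasSum (fun m => L * (B * ‖s‖) ^ M * (B * ‖s‖) ^ m)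
      (L * (B * ‖s‖) ^ M * (1 - B * ‖s‖)⁻¹) :=
    (hasSum_geometric_of_lt_one (by positivity) (by linarith)).mul_left _
  rw [seriesSum, ← hsum.sum_add_tsum_nat_add M, hhead, zero_add]
  calc ‖∑' m, coeff (m + M) F * s ^ (m + M)‖ ≤ L * (B * ‖s‖) ^ M * (1 - B * ‖s‖)⁻¹ :=
        tsum_of_norm_bounded htail fun m =>
          (norm_coeff_mul_pow_le (hF _)).trans_eq (by rw [pow_add]; ring)
    _ ≤ L * (B * ‖s‖) ^ M * 2 := by
        gcongr
        rw [inv_le_comm₀ (by linarith) two_pos]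
        linarith
    _ = 2 * L * (B * ‖s‖) ^ M := by ring

end SeriesSum

section SiegelLemma

theorem coeff_coe_sum_monomial_mul {A : Type*} [CommRing A] {k : ℕ} (t : Fin k → A)
    (F : PowerSeries A) (m : ℕ) :
    PowerSeries.coeff m (((∑ l : Fin k, monomial (l : ℕ) (t l) : A[X]) : PowerSeries A) * F) =
      ∑ l : Fin k, PowerSeries.coeff m (PowerSeries.X ^ (l : ℕ) * F) * t l := by
  rw [← coeToPowerSeries.ringHom_apply, map_sum, sum_mul, map_sum]
  refine sum_congr rfl fun l _ => ?_
  rw [coeToPowerSeries.ringHom_apply, ← C_mul_X_pow_eq_monomial, Polynomial.coe_mul,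
    Polynomial.coe_C, Polynomial.coe_pow, Polynomial.coe_X, mul_assoc, PowerSeries.coeff_C_mul,
    mul_comm]

theorem norm_coeff_X_pow_mul_le {A : Type*} [NormedCommRing A] {F : PowerSeries A} {B : ℝ}
    (hB : 1 ≤ B) (hF : ∀ m, ‖PowerSeries.coeff m F‖ ≤ B ^ m) (l : ℕ) {m M : ℕ} (hm : m ≤ M) :
    ‖PowerSeries.coeff m (PowerSeries.X ^ l * F)‖ ≤ B ^ M := by
  rw [PowerSeries.coeff_X_pow_mul']
  split_ifs with hlm
  · exact (hF _).trans (pow_le_pow_right₀ hB (by lia))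
  · rw [norm_zero]
    positivity

attribute [local instance] Matrix.seminormedAddCommGroup in
theorem exists_mulVec_eq_zero_norm_le {α : Type*} [Fintype α] {M : ℕ} (hM : 0 < M)
    (hα : Fintype.card α = 2 * M) (T : Matrix (Fin M) α ℤ) :
    ∃ t : α → ℤ, t ≠ 0 ∧ T.mulVec t = 0 ∧ ‖t‖ ≤ 2 * M * max 1 ‖T‖ := by
  obtain ⟨t, ht, hTt, htT⟩ := Int.Matrix.exists_ne_zero_int_vec_norm_le T
    (by rw [hα, Fintype.card_fin]; lia) (by rwa [Fintype.card_fin])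
  have hexp : (M : ℝ) / ((2 * M : ℕ) - M) = 1 := by
    rw [div_eq_one_iff_eq] <;> push_cast <;> ring_nf
    positivity
  rw [hα, Fintype.card_fin, hexp, Real.rpow_one] at htT
  exact ⟨t, ht, hTt, mod_cast htT⟩

attribute [local instance] Matrix.seminormedAddCommGroup in
theorem exists_ne_zero_X_pow_dvd_sum_mul {ι : Type*} [Fintype ι] {r k : ℕ} (hrk : 0 < r * k)
    (hι : Fintype.card ι = 2 * r) {F : ι → PowerSeries ℤ} {B : ℝ}
    (hB : 1 ≤ B) (hF : ∀ i m, ‖PowerSeries.coeff m (F i)‖ ≤ B ^ m) :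
    ∃ q : ι → ℤ[X], q ≠ 0 ∧ (∀ i, (q i).natDegree ≤ k) ∧
      (∀ i, length (q i) ≤ 2 * r * k ^ 2 * B ^ (r * k)) ∧
      PowerSeries.X ^ (r * k) ∣ ∑ i, (q i : PowerSeries ℤ) * F i := by
  let T : Matrix (Fin (r * k)) (ι × Fin k) ℤ :=
    .of fun m x => PowerSeries.coeff (m : ℕ) (PowerSeries.X ^ (x.2 : ℕ) * F x.1)
  obtain ⟨t, ht, hTt, htT⟩ := exists_mulVec_eq_zero_norm_le hrk
    (by rw [Fintype.card_prod, hι, Fintype.card_fin, mul_assoc]) T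
  have hT : max 1 ‖T‖ ≤ B ^ (r * k) := max_le (one_le_pow₀ hB) <|
    (Matrix.norm_le_iff (by positivity)).mpr fun m x =>
      norm_coeff_X_pow_mul_le hB (hF x.1) _ m.2.le
  have htB : ∀ x, ‖t x‖ ≤ 2 * r * k * B ^ (r * k) := fun x => by
    refine (norm_le_pi_norm t x).trans (htT.trans ?_)
    push_cast
    rw [← mul_assoc]
    gcongr
  refine ⟨fun i => ∑ l : Fin k, monomial (l : ℕ) (t (i, l)), fun hzero => ht ?_, fun i => ?_,
    fun i => ?_, PowerSeries.X_pow_dvd_iff.mpr fun m hm => ?_⟩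
  · funext ⟨i, l⟩
    simpa [finsetSum_coeff, coeff_monomial, Fin.val_inj] using
      congrArg (Polynomial.coeff · l) (congrFun hzero i)
  · exact natDegree_sum_le_of_forall_le _ _ fun l _ => (natDegree_monomial_le _).trans l.2.le
  · refine (length_sum_le _ _).trans ?_
    calc ∑ l : Fin k, length (monomial (l : ℕ) (t (i, l)))
        ≤ ∑ _l : Fin k, 2 * r * k * B ^ (r * k) :=
          sum_le_sum fun l _ => (length_monomial _ _).trans_le (htB _)
      _ = 2 * r * k ^ 2 * B ^ (r * k) := by
          rw [sum_const, card_univ, Fintype.card_fin, nsmul_eq_mul]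
          ring
  · have hrow := congrFun hTt ⟨m, hm⟩
    rw [Matrix.mulVec, dotProduct, Fintype.sum_prod_type] at hrow
    simp only [map_sum, coeff_coe_sum_monomial_mul]
    exact hrow

end SiegelLemma

section LinearForms

variable {ι : Type*} [Fintype ι]

theorem norm_sum_eval_mul_seriesSum_le {A : Type*} [NormedCommRing A] [NormOneClass A]
    [CompleteSpace A] {p : ι → A[X]} {F : ι → PowerSeries A} {s : A} {L B : ℝ} {M : ℕ}
    (hL : ∀ i, length (p i) ≤ L) (hB : 1 ≤ B) (hF : ∀ i m, ‖PowerSeries.coeff m (F i)‖ ≤ B ^ m)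
    (hs : B * ‖s‖ ≤ 1 / 2) (hM : PowerSeries.X ^ M ∣ ∑ i, (p i : PowerSeries A) * F i) :
    ‖∑ i, (p i).eval s * seriesSum (F i) s‖ ≤ 2 * (Fintype.card ι * L) * (B * ‖s‖) ^ M := by
  have hsum : ∀ i, Summable fun m => ‖PowerSeries.coeff m (F i) * s ^ m‖ := fun i =>
    summable_norm_coeff_mul_pow (L := 1) (B := B) (by linarith) (by simpa using hF i) (by linarith)
  have hcoe := fun i => summable_norm_coeff_coe_mul_pow (p i) s
  have hcoeff : ∀ m, ‖PowerSeries.coeff m (∑ i, (p i : PowerSeries A) * F i)‖ ≤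
      Fintype.card ι * L * B ^ m := fun m => by
    rw [map_sum, mul_assoc, ← nsmul_eq_mul]
    refine (norm_sum_le _ _).trans (sum_le_card_nsmul _ _ _ fun i _ => ?_)
    refine (norm_coeff_coe_mul_le (p i) hB (hF i) m).trans ?_
    gcongr
    exact hL i
  have hval : ∑ i, (p i).eval s * seriesSum (F i) s =
      seriesSum (∑ i, (p i : PowerSeries A) * F i) s := by
    rw [seriesSum_sum _ fun i _ => summable_norm_coeff_mul_mul_pow (hcoe i) (hsum i)]
    exact sum_congr rfl fun i _ => by rw [seriesSum_mul (hcoe i) (hsum i), seriesSum_coe]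
  rw [hval]
  exact norm_seriesSum_le (by linarith) hcoeff hs hM

theorem exists_intCast_eq_pow_mul_eval_inv {p : ℤ[X]} {d : ℕ} (hd : p.natDegree ≤ d) {t : ℤ}
    (ht : t ≠ 0) :
    ∃ z : ℤ, (z : ℝ) = t ^ d * (p.map (Int.castRingHom ℝ)).eval (t : ℝ)⁻¹ := by
  have ht' : (t : ℝ) ≠ 0 := Int.cast_ne_zero.mpr ht
  obtain ⟨z, b, hb, hz⟩ :=
    denomsClearable_of_natDegree_le (i := Int.castRingHom ℝ) d 1 (inv_mul_cancel₀ ht') p hd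
  rw [eq_intCast] at hb hz
  rw [eq_inv_of_mul_eq_one_left hb, map_one, one_mul] at hz
  exact ⟨z, hz⟩

theorem sum_eval_inv_mul_eq_zero_of_lt_one {p : ι → ℤ[X]} {d : ℕ}
    (hd : ∀ i, (p i).natDegree ≤ d) {t : ℤ} (ht : t ≠ 0) {v : ι → ℤ}
    (hlt : |(t : ℝ)| ^ d *
      |∑ i, ((p i).map (Int.castRingHom ℝ)).eval (t : ℝ)⁻¹ * v i| < 1) :
    ∑ i, ((p i).map (Int.castRingHom ℝ)).eval (t : ℝ)⁻¹ * v i = 0 := by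
  choose z hz using fun i => exists_intCast_eq_pow_mul_eval_inv (hd i) ht
  have hint : (t : ℝ) ^ d * ∑ i, ((p i).map (Int.castRingHom ℝ)).eval (t : ℝ)⁻¹ * v i =
      (∑ i, z i * v i : ℤ) := by
    push_cast
    rw [mul_sum]
    exact sum_congr rfl fun i _ => by rw [hz, mul_assoc]
  rw [← abs_pow, ← abs_mul, hint] at hlt
  have hzero : ∑ i, z i * v i = 0 := Int.abs_lt_one_iff.mp (mod_cast hlt)
  rw [hzero, Int.cast_zero] at hint
  exact (mul_eq_zero.mp hint).resolve_left (pow_ne_zero d (Int.cast_ne_zero.mpr ht))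

theorem abs_sum_mul_le_of_abs_sub_le {c y v : ι → ℝ} {a δ L : ℝ} (hc : ∀ i, |c i| ≤ L)
    (hv : ∀ i, |v i - a * y i| ≤ δ) :
    |∑ i, c i * v i| ≤ |a| * |∑ i, c i * y i| + Fintype.card ι * (L * δ) := by
  have hsplit : ∑ i, c i * v i = a * ∑ i, c i * y i + ∑ i, c i * (v i - a * y i) := by
    rw [mul_sum, ← sum_add_distrib]
    exact sum_congr rfl fun i _ => by ring
  rw [hsplit, ← abs_mul, ← nsmul_eq_mul]
  refine (abs_add_le _ _).trans (add_le_add le_rfl ((abs_sum_le_sum_abs _ _).trans ?_))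
  refine sum_le_card_nsmul _ _ _ fun i _ => ?_
  rw [abs_mul]
  exact mul_le_mul (hc i) (hv i) (abs_nonneg _) ((abs_nonneg _).trans (hc i))

theorem sum_eval_inv_mul_eq_zero {p : ι → ℤ[X]} {F : ι → PowerSeries ℤ} {v : ι → ℤ} {t d M : ℕ}
    {a δ L B : ℝ} (ht : t ≠ 0) (hd : ∀ i, (p i).natDegree ≤ d) (hL : ∀ i, length (p i) ≤ L)
    (hB : 1 ≤ B) (hF : ∀ i m, ‖PowerSeries.coeff m (F i)‖ ≤ B ^ m) (hBt : B * (t : ℝ)⁻¹ ≤ 1 / 2)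
    (hM : PowerSeries.X ^ M ∣ ∑ i, (p i : PowerSeries ℤ) * F i)
    (hv : ∀ i, |v i - a * seriesSum ((F i).map (Int.castRingHom ℝ)) (t : ℝ)⁻¹| ≤ δ)
    (hlt : (t : ℝ) ^ d * (Fintype.card ι * L * (2 * |a| * (B * (t : ℝ)⁻¹) ^ M + δ)) < 1) :
    ∑ i, ((p i).map (Int.castRingHom ℝ)).eval (t : ℝ)⁻¹ * v i = 0 := by
  have hnorm : ‖(t : ℝ)⁻¹‖ = (t : ℝ)⁻¹ := Real.norm_of_nonneg (by positivity)
  have hlength : ∀ i, length ((p i).map (Int.castRingHom ℝ)) ≤ L := fun i =>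
    (length_map_intCast (p i)).trans_le (hL i)
  have hdvd : PowerSeries.X ^ M ∣ ∑ i, ((p i).map (Int.castRingHom ℝ) : PowerSeries ℝ) *
      (F i).map (Int.castRingHom ℝ) := by
    simpa [Polynomial.polynomial_map_coe] using
      map_dvd (PowerSeries.map (Int.castRingHom ℝ)) hM
  have hsmall := norm_sum_eval_mul_seriesSum_le hlength hB
    (fun i m => by
      rw [PowerSeries.coeff_map, eq_intCast, Int.norm_cast_real]
      exact hF i m) (by rwa [hnorm]) hdvd
  have hle_one : ‖(t : ℝ)⁻¹‖ ≤ 1 := by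
    rw [hnorm]
    exact inv_le_one_of_one_le₀ (mod_cast Nat.one_le_iff_ne_zero.mpr ht)
  have happrox := abs_sum_mul_le_of_abs_sub_le
    (fun i => (norm_eval_le_length _ hle_one).trans (hlength i)) hv
  rw [hnorm, Real.norm_eq_abs] at hsmall
  have hzero := sum_eval_inv_mul_eq_zero_of_lt_one hd (t := t) (mod_cast ht) (v := v)
  simp only [Int.cast_natCast, Nat.abs_cast] at hzero
  refine hzero (lt_of_le_of_lt ?_ hlt)
  gcongr
  calc _ ≤ |a| * (2 * (Fintype.card ι * L) * (B * (t : ℝ)⁻¹) ^ M) + Fintype.card ι * (L * δ) :=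
        happrox.trans (by gcongr)
    _ = Fintype.card ι * L * (2 * |a| * (B * (t : ℝ)⁻¹) ^ M + δ) := by ring

end LinearForms

section Solutions

/-- `n` solves the Brocard–Ramanujan equation `n! + 1 = x²`. -/
def IsBrocard (n : ℕ) : Prop := ∃ x : ℤ, (n ! : ℤ) + 1 = x ^ 2

theorem abs_sub_le_or_abs_neg_sub_le {x z : ℝ} (hz : z ≠ 0) (hxz : x ^ 2 = z ^ 2 + 1) :
    |x - z| ≤ 1 / |z| ∨ |-x - z| ≤ 1 / |z| := by
  wlog hx : 0 ≤ x * z generalizing x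
  · simpa [or_comm] using this (x := -x) (by simpa using hxz) (by linarith)
  left
  have hprod : |x - z| * |x + z| = 1 := by
    rw [← abs_mul, show (x - z) * (x + z) = 1 by linear_combination hxz, abs_one]
  have hsum : |z| ≤ |x + z| := sq_le_sq.mp (by nlinarith [sq_nonneg x])
  rw [le_div_iff₀ (abs_pos.mpr hz), ← hprod]
  gcongr

theorem seriesSum_sqrtSeries_sq {e h : ℕ} (he : e ≤ h) {s : ℝ} (hs : 4 * (h : ℝ) ^ 2 * |s| < 1) :
    seriesSum ((sqrtSeries e).map (Int.castRingHom ℝ)) s ^ 2 = (ratioPoly ℝ e).eval s := by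
  have hsum : Summable fun m =>
      ‖PowerSeries.coeff m ((sqrtSeries e).map (Int.castRingHom ℝ)) * s ^ m‖ := by
    refine summable_norm_coeff_mul_pow (L := 1) (by positivity) (fun m => ?_) hs
    rw [one_mul, PowerSeries.coeff_map, eq_intCast, Int.norm_cast_real, Int.norm_eq_abs]
    exact_mod_cast abs_coeff_sqrtSeries_le he m
  rw [sq, ← seriesSum_mul hsum hsum, ← map_mul, ← sq, sqrtSeries_sq, ← polynomial_map_coe,
    map_ratioPoly, seriesSum_coe]

theorem IsBrocard.exists_abs_sub_le {n g lam : ℕ} (hn : n ≠ 0) (hg : g ≤ lam)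
    (hsol : IsBrocard (n + 2 * g)) {y : ℝ}
    (hy : y ^ 2 = (ratioPoly ℝ (2 * g)).eval (4 * (n : ℝ))⁻¹) :
    ∃ v : ℤ, v ≠ 0 ∧ |v - √(n ! : ℝ) * n ^ lam * y| ≤ n ^ lam / √(n ! : ℝ) := by
  obtain ⟨x, hx⟩ := hsol
  have hx₀ : x ≠ 0 := fun h => by
    have hpos : (0 : ℤ) < (n + 2 * g)! := mod_cast Nat.factorial_pos _
    rw [h] at hx
    linarith
  set z : ℝ := √(n ! : ℝ) * n ^ g * y
  have hz : z ^ 2 = ((n + 2 * g)! : ℕ) := by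
    rw [factorial_add_eq_mul_eval_ratioPoly hn, ← hy, mul_pow, mul_pow,
      Real.sq_sqrt (Nat.cast_nonneg _), ← pow_mul, mul_comm g]
  have hsqrt_le : √(n ! : ℝ) ≤ |z| := by
    rw [← Real.sqrt_sq_eq_abs, hz]
    exact Real.sqrt_le_sqrt (mod_cast Nat.factorial_le (by lia))
  have hsqrt_pos : 0 < √(n ! : ℝ) := Real.sqrt_pos.mpr (mod_cast n.factorial_pos)
  have hxz : (x : ℝ) ^ 2 = z ^ 2 + 1 := by
    rw [hz]
    exact_mod_cast hx.symm
  obtain ⟨w, hw₀, hw⟩ : ∃ w : ℤ, w ≠ 0 ∧ |w - z| ≤ 1 / |z| := by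
    rcases abs_sub_le_or_abs_neg_sub_le (abs_pos.mp (hsqrt_pos.trans_le hsqrt_le)) hxz with h | h
    exacts [⟨x, hx₀, h⟩, ⟨-x, neg_ne_zero.mpr hx₀, mod_cast h⟩]
  refine ⟨n ^ (lam - g) * w, mul_ne_zero (pow_ne_zero _ (mod_cast hn)) hw₀, ?_⟩
  have hscale : ((n ^ (lam - g) * w : ℤ) : ℝ) - √(n ! : ℝ) * n ^ lam * y =
      n ^ (lam - g) * (w - z) := by
    rw [← Nat.sub_add_cancel hg, pow_add, Nat.add_sub_cancel]
    push_cast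
    ring
  rw [hscale, abs_mul, abs_of_nonneg (by positivity), div_eq_mul_one_div]
  gcongr
  · exact_mod_cast Nat.one_le_iff_ne_zero.mpr hn
  · exact Nat.sub_le lam g
  · exact hw.trans (one_div_le_one_div_of_le hsqrt_pos hsqrt_le)

end Solutions

section Numerics

open Real

theorem exp_le_sqrt_factorial {n : ℕ} {L : ℝ} (hL : exp L ≤ n) :
    exp (n * (L - 1) / 2) ≤ √(n ! : ℝ) := by
  refine Real.le_sqrt_of_sq_le ?_
  rw [← exp_nat_mul, Nat.cast_ofNat, mul_div_cancel₀ _ two_ne_zero]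
  refine le_of_mul_le_mul_right ?_ (exp_pos n)
  calc exp (n * (L - 1)) * exp n = exp L ^ n := by rw [← exp_add, ← exp_nat_mul]; ring_nf
    _ ≤ (n : ℝ) ^ n := by gcongr
    _ ≤ n ! * exp n := by
      rw [← div_le_iff₀' (mod_cast n.factorial_pos)]
      exact Real.pow_div_factorial_le_exp n n.cast_nonneg n

theorem sqrt_factorial_le_exp {n : ℕ} {L : ℝ} (hL : n ≤ exp L) :
    √(n ! : ℝ) ≤ exp (n * L / 2) := by
  refine Real.sqrt_le_left (exp_pos _).le |>.mpr ?_
  rw [← exp_nat_mul, Nat.cast_ofNat, mul_div_cancel₀ _ two_ne_zero, exp_nat_mul]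
  calc (n ! : ℝ) ≤ (n : ℝ) ^ n := mod_cast Nat.factorial_le_pow n
    _ ≤ exp L ^ n := by gcongr

/-- The parameters of the interpolation argument for `n ∈ [N, 2N]` and shifts `2 * g ≤ 2 * lam`:
`k` bounds the degree of the auxiliary polynomials and `J` the number of derivatives taken. -/
structure IsAdmissible (N lam k J : ℕ) : Prop where
  log_ge : 100 ≤ log N
  one_le_lam : 1 ≤ lam
  pow_le : (4 * lam) ^ 34 ≤ N
  k_eq : k = N / 4
  J_eq : J = k / (200 * lam)

namespace IsAdmissible

variable {N lam k J n : ℕ}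

theorem pow_mul_lam_sq_le (h : IsAdmissible N lam k J) : 16 ^ 17 * lam ^ 2 ≤ N :=
  calc 16 ^ 17 * lam ^ 2 ≤ 16 ^ 17 * lam ^ 34 := by gcongr; exacts [h.one_le_lam, by norm_num]
    _ = (4 * lam) ^ 34 := by ring
    _ ≤ N := h.pow_le

theorem lam_le (h : IsAdmissible N lam k J) : 10000 * lam ≤ k := by
  have := h.pow_mul_lam_sq_le
  have := Nat.le_self_pow two_ne_zero lam
  have := h.k_eq
  lia

theorem J_mul_le (h : IsAdmissible N lam k J) : J * (200 * lam) ≤ k :=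
  h.J_eq ▸ Nat.div_mul_le_self _ _

theorem J_le (h : IsAdmissible N lam k J) : 200 * J ≤ k :=
  calc 200 * J ≤ 200 * J * lam := Nat.le_mul_of_pos_right _ h.one_le_lam
    _ = J * (200 * lam) := by ring
    _ ≤ k := h.J_mul_le

theorem exp_log (h : IsAdmissible N lam k J) : exp (log N) = N :=
  Real.exp_log (mod_cast (Nat.zero_lt_of_ne_zero fun h₀ => by
    have := h.log_ge
    rw [h₀, Nat.cast_zero, log_zero] at this
    norm_num at this))

theorem two_mul_le_exp (h : IsAdmissible N lam k J) : 2 * (N : ℝ) ≤ exp (log N + 1) := by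
  rw [exp_add, h.exp_log, mul_comm]
  gcongr
  linarith [add_one_le_exp 1]

theorem hundred_mul_le (h : IsAdmissible N lam k J) : 100 * (k : ℝ) ≤ k * log N := by
  rw [mul_comm]
  exact mul_le_mul_of_nonneg_left h.log_ge k.cast_nonneg

theorem lam_mul_log_le (h : IsAdmissible N lam k J) : 10000 * (lam * log N) ≤ k * log N := by
  rw [← mul_assoc]
  exact mul_le_mul_of_nonneg_right (mod_cast h.lam_le) (by linarith [h.log_ge])

theorem log_le (h : IsAdmissible N lam k J) : 10000 * log N ≤ k * log N :=
  mul_le_mul_of_nonneg_right (mod_cast (by linarith [h.lam_le, h.one_le_lam]))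
    (by linarith [h.log_ge])

theorem pow_le_exp (h : IsAdmissible N lam k J) (hn : n ≤ 2 * N) :
    (n : ℝ) ^ lam ≤ exp (1 / 100 * (k * log N)) := by
  have hn' : (n : ℝ) ≤ exp (log N + 1) := (mod_cast hn : (n : ℝ) ≤ 2 * N).trans h.two_mul_le_exp
  calc (n : ℝ) ^ lam ≤ exp (log N + 1) ^ lam := by gcongr
    _ = exp (lam * (log N + 1)) := by rw [← exp_nat_mul]
    _ ≤ _ := by
      have : (10000 : ℝ) * lam ≤ k := mod_cast h.lam_le
      have := h.lam_mul_log_le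
      have := h.hundred_mul_le
      refine exp_le_exp.mpr ?_
      linarith

theorem four_mul_pow_le_exp (h : IsAdmissible N lam k J) (hn : n ≤ 2 * N) :
    ((4 * n : ℕ) : ℝ) ^ (k + J * (2 * lam)) ≤ exp (21 / 20 * (k * log N)) := by
  have hfour : (4 : ℝ) ≤ exp 2 := by
    have : (2 : ℝ) ≤ exp 1 := by linarith [add_one_le_exp 1]
    calc (4 : ℝ) ≤ exp 1 * exp 1 := by nlinarith
      _ = exp 2 := by rw [← exp_add, one_add_one_eq_two]
  have hbase : ((4 * n : ℕ) : ℝ) ≤ exp (2 + (log N + 1)) := by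
    rw [exp_add, Nat.cast_mul, Nat.cast_ofNat]
    gcongr
    exact (mod_cast hn : (n : ℝ) ≤ 2 * N).trans h.two_mul_le_exp
  have hexponent : ((k + J * (2 * lam) : ℕ) : ℝ) ≤ 101 / 100 * k := by
    have : (J : ℝ) * (200 * lam) ≤ k := mod_cast h.J_mul_le
    push_cast
    linarith
  calc _ ≤ exp (2 + (log N + 1)) ^ (k + J * (2 * lam)) := by gcongr
    _ = exp ((k + J * (2 * lam) : ℕ) * (2 + (log N + 1))) := by rw [← exp_nat_mul]
    _ ≤ exp (101 / 100 * k * (2 + (log N + 1))) := by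
      gcongr
    _ ≤ _ := by
      refine exp_le_exp.mpr ?_
      linarith [h.hundred_mul_le]

theorem coeff_base_le_exp (h : IsAdmissible N lam k J) :
    4 * ((2 * lam : ℕ) : ℝ) ^ 2 ≤ exp (1 / 17 * log N) := by
  refine le_of_pow_le_pow_left₀ (n := 17) (by norm_num) (exp_pos _).le ?_
  rw [← exp_nat_mul, Nat.cast_ofNat, ← mul_assoc, mul_one_div_cancel (by norm_num), one_mul,
    h.exp_log]
  calc (4 * ((2 * lam : ℕ) : ℝ) ^ 2) ^ 17 = (((4 * lam) ^ 34 : ℕ) : ℝ) := by push_cast; ring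
    _ ≤ N := mod_cast h.pow_le

theorem length_le_exp (h : IsAdmissible N lam k J) :
    16 * (((N : ℝ) ^ (2 * (2 * lam))) ^ J *
      (2 * 8 * k ^ 2 * (4 * ((2 * lam : ℕ) : ℝ) ^ 2) ^ (8 * k))) ≤
      exp (1 / 2 * (k * log N)) := by
  have hsq : 2 * 16 * 8 * (k : ℝ) ^ 2 ≤ exp (4 * log N) := by
    have hN : (16 : ℝ) ≤ N := mod_cast le_trans (by norm_num) ((Nat.le_mul_of_pos_right (16 ^ 17)
      (pow_pos h.one_le_lam 2)).trans h.pow_mul_lam_sq_le)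
    have hk : 4 * (k : ℝ) ≤ N := mod_cast (by have := h.k_eq; lia : 4 * k ≤ N)
    rw [show exp (4 * log N) = exp (log N) ^ 4 from exp_nat_mul (log N) 4, h.exp_log]
    calc 2 * 16 * 8 * (k : ℝ) ^ 2 = 16 * (4 * k) ^ 2 := by ring
      _ ≤ (N : ℝ) ^ 2 * (N : ℝ) ^ 2 := by gcongr; nlinarith
      _ = (N : ℝ) ^ 4 := by ring
  have hpow : (4 * ((2 * lam : ℕ) : ℝ) ^ 2) ^ (8 * k) ≤ exp (8 / 17 * (k * log N)) :=
    calc _ ≤ exp (1 / 17 * log N) ^ (8 * k) := by gcongr; exact h.coeff_base_le_exp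
      _ = exp (8 / 17 * (k * log N)) := by rw [← exp_nat_mul]; push_cast; ring_nf
  have hderiv : ((N : ℝ) ^ (2 * (2 * lam))) ^ J ≤ exp (1 / 50 * (k * log N)) := by
    rw [← pow_mul, ← h.exp_log, ← exp_nat_mul, h.exp_log, ← mul_assoc (1 / 50 : ℝ)]
    have hJ : (J : ℝ) * (200 * lam) ≤ k := mod_cast h.J_mul_le
    have := h.log_ge
    refine exp_le_exp.mpr (mul_le_mul_of_nonneg_right ?_ (by linarith))
    push_cast
    linarith
  calc _ = 2 * 16 * 8 * (k : ℝ) ^ 2 * (4 * ((2 * lam : ℕ) : ℝ) ^ 2) ^ (8 * k) *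
        ((N : ℝ) ^ (2 * (2 * lam))) ^ J := by ring
    _ ≤ exp (4 * log N) * exp (8 / 17 * (k * log N)) * exp (1 / 50 * (k * log N)) := by gcongr
    _ ≤ _ := by
      rw [← exp_add, ← exp_add]
      gcongr
      linarith [h.log_le, h.log_ge]

theorem inv_sqrt_factorial_le (h : IsAdmissible N lam k J) (hn : N ≤ n) :
    (√(n ! : ℝ))⁻¹ ≤ exp (-(19 / 10) * (k * log N)) := by
  rw [neg_mul, exp_neg]
  refine inv_anti₀ (exp_pos _) (le_trans ?_ (exp_le_sqrt_factorial (L := log N) ?_))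
  · have hk : 4 * (k : ℝ) ≤ n := mod_cast (by have := h.k_eq; lia : 4 * k ≤ n)
    have := mul_le_mul_of_nonneg_right hk (by linarith [h.log_ge] : 0 ≤ log N - 1)
    gcongr
    linarith [h.hundred_mul_le]
  · rw [h.exp_log]
    exact_mod_cast hn

theorem sqrt_factorial_le (h : IsAdmissible N lam k J) (hn : n ≤ 2 * N) :
    √(n ! : ℝ) ≤ exp (41 / 10 * (k * log N)) := by
  have hn' : (n : ℝ) ≤ exp (log N + 1) := (mod_cast hn : (n : ℝ) ≤ 2 * N).trans h.two_mul_le_exp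
  refine (sqrt_factorial_le_exp hn').trans (exp_le_exp.mpr ?_)
  have hk : (n : ℝ) ≤ 8 * k + 8 := mod_cast (by have := h.k_eq; lia : n ≤ 8 * k + 8)
  have := mul_le_mul_of_nonneg_right hk (by linarith [h.log_ge] : 0 ≤ log N + 1)
  linarith [h.hundred_mul_le, h.log_le, h.log_ge]

theorem mul_inv_pow_le_exp (h : IsAdmissible N lam k J) (hn : N ≤ n) :
    (4 * ((2 * lam : ℕ) : ℝ) ^ 2 * ((4 * n : ℕ) : ℝ)⁻¹) ^ (8 * k - J) ≤
      exp (-(15 / 2) * (k * log N)) := by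
  have hinv : ((4 * n : ℕ) : ℝ)⁻¹ ≤ exp (-log N) := by
    rw [exp_neg]
    refine inv_anti₀ (exp_pos _) ?_
    rw [h.exp_log]
    exact_mod_cast (by lia : N ≤ 4 * n)
  have hJ : 200 * (J : ℝ) ≤ k := mod_cast h.J_le
  have hexponent : (799 / 100 : ℝ) * k ≤ ((8 * k - J : ℕ) : ℝ) := by
    rw [Nat.cast_sub (by have := h.J_le; lia)]
    push_cast
    linarith [(Nat.cast_nonneg k : (0 : ℝ) ≤ k)]
  have hlog : 0 ≤ log N := by linarith [h.log_ge]
  calc _ ≤ (exp (1 / 17 * log N) * exp (-log N)) ^ (8 * k - J) := by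
        gcongr
        exact h.coeff_base_le_exp
    _ = exp (-(16 / 17 * (((8 * k - J : ℕ) : ℝ) * log N))) := by
      rw [← exp_add, ← exp_nat_mul]
      ring_nf
    _ ≤ exp (-(16 / 17 * (799 / 100 * k * log N))) := by gcongr
    _ ≤ _ := by
      gcongr
      linarith [mul_nonneg (Nat.cast_nonneg k : (0 : ℝ) ≤ k) hlog]

theorem pow_mul_lt_one (h : IsAdmissible N lam k J) (hn₁ : N ≤ n) (hn₂ : n ≤ 2 * N) :
    ((4 * n : ℕ) : ℝ) ^ (k + J * (2 * lam)) *
      (16 * (((N : ℝ) ^ (2 * (2 * lam))) ^ J *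
        (2 * 8 * k ^ 2 * (4 * ((2 * lam : ℕ) : ℝ) ^ 2) ^ (8 * k))) *
        (2 * |√(n ! : ℝ) * n ^ lam| *
          (4 * ((2 * lam : ℕ) : ℝ) ^ 2 * ((4 * n : ℕ) : ℝ)⁻¹) ^ (8 * k - J) +
          n ^ lam / √(n ! : ℝ))) < 1 := by
  set E : ℝ := k * log N
  have hE : 10 ≤ E := by linarith [h.log_le, h.log_ge]
  have hfour := h.four_mul_pow_le_exp hn₂
  have hlength := h.length_le_exp
  have hpow := h.pow_le_exp hn₂
  have hsqrt := h.sqrt_factorial_le hn₂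
  have hinv := h.inv_sqrt_factorial_le hn₁
  have hsmall := h.mul_inv_pow_le_exp hn₁
  rw [abs_of_nonneg (by positivity), div_eq_mul_inv]
  calc _ ≤ exp (21 / 20 * E) * (exp (1 / 2 * E) *
        (2 * (exp (41 / 10 * E) * exp (1 / 100 * E)) * exp (-(15 / 2) * E) +
          exp (1 / 100 * E) * exp (-(19 / 10) * E))) := by gcongr
    _ = 2 * exp (-(46 / 25) * E) + exp (-(17 / 50) * E) := by
      simp only [mul_add, mul_left_comm _ (2 : ℝ), mul_assoc, ← exp_add]
      ring_nf
    _ ≤ 2 * exp (-2) + exp (-2) := by gcongr <;> linarith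
    _ < 1 := by
      have hmul : exp (-2) * exp 2 = 1 := by rw [← exp_add, neg_add_cancel, exp_zero]
      nlinarith [add_one_lt_exp (two_ne_zero (α := ℝ)), exp_pos (-2)]

end IsAdmissible

end Numerics

section Interpolation

namespace IsAdmissible

variable {N lam k J n : ℕ}

theorem length_iterate_le (h : IsAdmissible N lam k J) {e j : ℕ} (he : e ≤ 2 * lam)
    (hj : j ≤ J) {q : ℤ[X]} (hq : q.natDegree ≤ k) :
    length ((twistedDeriv (ratioPoly ℤ (2 * lam)) (sqrtOdeCoeff ℤ (2 * lam) e))^[j] q) ≤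
      ((N : ℝ) ^ (2 * (2 * lam))) ^ J * length q := by
  have hlam := h.one_le_lam
  have hpow := h.pow_mul_lam_sq_le
  have hself := Nat.le_self_pow two_ne_zero lam
  have hbase : 5 * ((2 * lam : ℕ) : ℝ) ≤ N := mod_cast (by lia : 5 * (2 * lam) ≤ N)
  have hfactor : ((k + J * (2 * lam) : ℕ) : ℝ) + 2 * ((2 * lam : ℕ) : ℝ) ^ 2 ≤ N := by
    have := h.J_mul_le
    have := h.k_eq
    have : 2 * (2 * lam) ^ 2 = 8 * lam ^ 2 := by ring
    exact_mod_cast (by lia : k + J * (2 * lam) + 2 * (2 * lam) ^ 2 ≤ N)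
  have hN : (1 : ℝ) ≤ N := mod_cast (by lia : 1 ≤ N)
  have hΓ : ((k + J * (2 * lam) : ℕ) : ℝ) * length (ratioPoly ℤ (2 * lam)) +
      length (sqrtOdeCoeff ℤ (2 * lam) e) ≤ (N : ℝ) ^ (2 * (2 * lam)) :=
    calc _ ≤ ((k + J * (2 * lam) : ℕ) : ℝ) * (5 * (2 * lam : ℕ)) ^ (2 * lam) +
          2 * ((2 * lam : ℕ) : ℝ) ^ 2 * (5 * (2 * lam : ℕ)) ^ (2 * lam) := by
          gcongr
          exacts [length_ratioPoly_le _, length_sqrtOdeCoeff_le he]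
      _ = (((k + J * (2 * lam) : ℕ) : ℝ) + 2 * ((2 * lam : ℕ) : ℝ) ^ 2) *
          (5 * ((2 * lam : ℕ) : ℝ)) ^ (2 * lam) := by ring
      _ ≤ N * (N : ℝ) ^ (2 * lam) := by gcongr
      _ = (N : ℝ) ^ (2 * lam + 1) := by ring
      _ ≤ _ := pow_le_pow_right₀ hN (by lia)
  refine (length_twistedDeriv_iterate_le (natDegree_ratioPoly_le _)
    (natDegree_sqrtOdeCoeff_le _ _) hq hΓ (by gcongr)).trans ?_
  gcongr
  · exact length_nonneg _
  · exact one_le_pow₀ hN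

theorem one_le_coeff_base (h : IsAdmissible N lam k J) : 1 ≤ 4 * ((2 * lam : ℕ) : ℝ) ^ 2 :=
  mod_cast Nat.mul_pos four_pos (pow_pos (Nat.mul_pos two_pos h.one_le_lam) 2)

theorem coeff_base_mul_inv_le (h : IsAdmissible N lam k J) (hn : N ≤ n) :
    4 * ((2 * lam : ℕ) : ℝ) ^ 2 * ((4 * n : ℕ) : ℝ)⁻¹ ≤ 1 / 2 := by
  have hn : (16 ^ 17 : ℝ) * lam ^ 2 ≤ n := mod_cast h.pow_mul_lam_sq_le.trans hn
  have hlam : (0 : ℝ) < lam := mod_cast h.one_le_lam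
  have hsq : 0 < (lam : ℝ) ^ 2 := by positivity
  rw [mul_inv_le_iff₀ (by push_cast; linarith)]
  push_cast
  linarith

theorem exists_forall_sum_twistedDeriv_eq_zero (h : IsAdmissible N lam k J) {g : Fin 16 → ℕ}
    (hg : ∀ i, g i ≤ lam) {q : Fin 16 → ℤ[X]} (hdeg : ∀ i, (q i).natDegree ≤ k)
    (hlen : ∀ i, length (q i) ≤ 2 * 8 * k ^ 2 * (4 * ((2 * lam : ℕ) : ℝ) ^ 2) ^ (8 * k))
    (hdvd : PowerSeries.X ^ (8 * k) ∣ ∑ i, (q i : PowerSeries ℤ) * sqrtSeries (2 * g i))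
    (hn₁ : N ≤ n) (hn₂ : n ≤ 2 * N) (hsol : ∀ i, IsBrocard (n + 2 * g i)) :
    ∃ v : Fin 16 → ℤ, (∀ i, v i ≠ 0) ∧ ∀ j < J + 1,
      ∑ i, (((twistedDeriv (ratioPoly ℤ (2 * lam)) (sqrtOdeCoeff ℤ (2 * lam) (2 * g i)))^[j]
        (q i)).map (Int.castRingHom ℝ)).eval ((4 * n : ℕ) : ℝ)⁻¹ * v i = 0 := by
  have he : ∀ i, 2 * g i ≤ 2 * lam := fun i => Nat.mul_le_mul_left 2 (hg i)
  have hBt := h.coeff_base_mul_inv_le hn₁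
  have hn : n ≠ 0 := by have := h.J_le; have := h.lam_le; have := h.one_le_lam; have := h.k_eq; lia
  have hsq : ∀ i, seriesSum ((sqrtSeries (2 * g i)).map (Int.castRingHom ℝ))
      ((4 * n : ℕ) : ℝ)⁻¹ ^ 2 = (ratioPoly ℝ (2 * g i)).eval (4 * (n : ℝ))⁻¹ := fun i => by
    rw [seriesSum_sqrtSeries_sq (he i), Nat.cast_mul, Nat.cast_ofNat]
    rw [abs_of_nonneg (by positivity)]
    linarith
  choose v hv₀ hv using fun i => (hsol i).exists_abs_sub_le hn (hg i) (hsq i)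
  refine ⟨v, hv₀, fun j hj => ?_⟩
  have hj : j ≤ J := Nat.lt_succ_iff.mp hj
  have hdvd_deriv := X_pow_dvd_sum_twistedDeriv_iterate
    (fun i => ratioPoly_mul_derivative_sqrtSeries (he i)) hdvd j
  refine sum_eval_inv_mul_eq_zero (d := k + J * (2 * lam)) (L := _ * _)
    (mul_ne_zero four_ne_zero hn) (fun i => ?_)
    (fun i => (h.length_iterate_le (he i) hj (hdeg i)).trans
      (mul_le_mul_of_nonneg_left (hlen i) (by positivity)))
    h.one_le_coeff_base (fun i m => ?_) hBt
    ((pow_dvd_pow _ (Nat.sub_le_sub_left hj _)).trans hdvd_deriv) hv ?_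
  · exact (natDegree_twistedDeriv_iterate_le (natDegree_ratioPoly_le _)
      (natDegree_sqrtOdeCoeff_le _ _) (hdeg i) j).trans (by gcongr)
  · rw [Int.norm_eq_abs]
    exact_mod_cast abs_coeff_sqrtSeries_le (he i) m
  · rw [Fintype.card_fin, Nat.cast_ofNat]
    exact h.pow_mul_lt_one hn₁ hn₂

theorem fifty_le_J (h : IsAdmissible N lam k J) : 50 ≤ J := by
  have := h.lam_le
  rw [h.J_eq, Nat.le_div_iff_mul_le (mul_pos (by norm_num) h.one_le_lam)]
  lia

theorem le_of_mul_sub_le (h : IsAdmissible N lam k J) {c : ℕ}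
    (hc : c * (J - 14) ≤ 16 * (k + 16 * (2 * lam))) :
    c ≤ 6800 * lam := by
  have hlam := h.lam_le
  have hJ := h.fifty_le_J
  have hk : k < (J + 1) * (200 * lam) := by
    rw [h.J_eq, mul_comm]
    exact Nat.lt_mul_div_succ _ (mul_pos (by norm_num) h.one_le_lam)
  refine Nat.le_of_mul_le_mul_right (c := J - 14) ?_ (by lia)
  calc c * (J - 14) ≤ 17 * k := by lia
    _ ≤ 17 * ((J + 1) * (200 * lam)) := by gcongr
    _ ≤ 17 * (2 * (J - 14) * (200 * lam)) := by gcongr; lia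
    _ = 6800 * lam * (J - 14) := by ring

theorem card_le_of_forall_isBrocard_add (h : IsAdmissible N lam k J) {g : Fin 16 → ℕ}
    (hg : ∀ i, g i ≤ lam) (hinj : Function.Injective g) {S : Finset ℕ}
    (hS : ∀ n ∈ S, N ≤ n ∧ n ≤ 2 * N ∧ ∀ i, IsBrocard (n + 2 * g i)) : #S ≤ 6800 * lam := by
  have he : ∀ i, 2 * g i ≤ 2 * lam := fun i => Nat.mul_le_mul_left 2 (hg i)
  have hJ := h.fifty_le_J
  obtain ⟨q, hq, hdeg, hlen, hdvd⟩ := exists_ne_zero_X_pow_dvd_sum_mul (r := 8) (k := k)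
    (by have := h.lam_le; have := h.one_le_lam; lia) (Fintype.card_fin 16) h.one_le_coeff_base
    (F := fun i => sqrtSeries (2 * g i)) fun i m => by
      rw [Int.norm_eq_abs]
      exact_mod_cast abs_coeff_sqrtSeries_le (he i) m
  have hq_map : (fun i => (q i).map (Int.castRingHom ℝ)) ≠ 0 := fun h₀ =>
    hq (funext fun i => map_injective _ Int.cast_injective (by simpa using congrFun h₀ i))
  have hsep : Pairwise fun i i' => ¬ IsLogDeriv (ratioPoly ℝ (2 * lam))
      (sqrtOdeCoeff ℝ (2 * lam) (2 * g i) - sqrtOdeCoeff ℝ (2 * lam) (2 * g i')) :=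
    fun i i' hii' => not_isLogDeriv_sqrtOdeCoeff_sub (he i) (he i')
      fun h₀ => hii' (hinj (Nat.eq_of_mul_eq_mul_left two_pos h₀))
  have hkernel : ∀ s ∈ S.image fun n : ℕ => ((4 * n : ℕ) : ℝ)⁻¹,
      (ratioPoly ℝ (2 * lam)).eval s ≠ 0 ∧ ∃ v : Fin 16 → ℝ, (∀ i, v i ≠ 0) ∧ ∀ j < J + 1,
        ∑ i, ((twistedDeriv (ratioPoly ℝ (2 * lam)) (sqrtOdeCoeff ℝ (2 * lam) (2 * g i)))^[j]
          ((q i).map (Int.castRingHom ℝ))).eval s * v i = 0 := by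
    refine forall_mem_image.mpr fun n hn => ?_
    obtain ⟨hn₁, hn₂, hsol⟩ := hS n hn
    obtain ⟨v, hv₀, hv⟩ :=
      h.exists_forall_sum_twistedDeriv_eq_zero hg hdeg (mod_cast hlen) hdvd hn₁ hn₂ hsol
    refine ⟨(zero_lt_one.trans_le (one_le_eval_ratioPoly (by positivity) _)).ne',
      fun i => v i, fun i => Int.cast_ne_zero.mpr (hv₀ i), fun j hj => ?_⟩
    simpa only [map_twistedDeriv_iterate, map_ratioPoly, map_sqrtOdeCoeff] using hv j hj
  have hcard := card_mul_le_of_ne_zero (natDegree_ratioPoly_le _)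
    (fun i => natDegree_sqrtOdeCoeff_le _ _) (fun i => natDegree_map_le.trans (hdeg i)) hq_map
    hsep (m := J - 14) (by rw [Fintype.card_fin]; lia) _ hkernel
  rw [card_image_of_injective _ (fun a b hab => by simpa using hab), Fintype.card_fin] at hcard
  exact h.le_of_mul_sub_le hcard

end IsAdmissible

end Interpolation

section Counting

/-- The least element of the block of `n`: the integers of each parity are split into blocks of
`lam` consecutive terms, so that the elements of a block are `blockBase lam n + 2 * g` with
`g < lam`. -/
def blockBase (lam n : ℕ) : ℕ := 2 * lam * (n / 2 / lam) + n % 2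

/-- The positions `g < lam` of the solutions `β + 2 * g` in the block starting at `β`. -/
noncomputable def window (lam β : ℕ) : Finset ℕ := {g ∈ range lam | IsBrocard (β + 2 * g)}

theorem blockBase_add (lam n : ℕ) : blockBase lam n + 2 * (n / 2 % lam) = n := by
  have := Nat.div_add_mod (n / 2) lam
  rw [blockBase, mul_assoc]
  lia

theorem card_window_le (lam β : ℕ) : #(window lam β) ≤ lam :=
  (card_filter_le _ _).trans_eq (card_range lam)

theorem card_filter_blockBase_eq_le {lam : ℕ} (hlam : 0 < lam) {T : Finset ℕ}
    (hT : ∀ n ∈ T, IsBrocard n) (β : ℕ) : #{n ∈ T | blockBase lam n = β} ≤ #(window lam β) := by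
  refine card_le_card_of_injOn (fun n => n / 2 % lam) (fun n hn => ?_) fun a ha b hb hab => ?_
  · obtain ⟨hnT, rfl⟩ := mem_filter.mp (mem_coe.mp hn)
    refine mem_filter.mpr ⟨mem_range.mpr (Nat.mod_lt _ hlam), ?_⟩
    rw [blockBase_add]
    exact hT n hnT
  · rw [← blockBase_add lam a, ← blockBase_add lam b, (mem_filter.mp ha).2, (mem_filter.mp hb).2]
    exact congrArg (fun g => β + 2 * g) hab

theorem card_le_mul_card_of_blockBase_mem {lam c : ℕ} (hlam : 0 < lam) {T U : Finset ℕ}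
    (hT : ∀ n ∈ T, IsBrocard n) (hU : ∀ n ∈ T, blockBase lam n ∈ U)
    (hc : ∀ n ∈ T, #(window lam (blockBase lam n)) ≤ c) : #T ≤ c * #U := by
  have hfiber : ∀ β ∈ T.image (blockBase lam), #{n ∈ T | blockBase lam n = β} ≤ c :=
    forall_mem_image.mpr fun n hn => (card_filter_blockBase_eq_le hlam hT _).trans (hc n hn)
  refine (card_le_mul_card_image T c hfiber).trans (Nat.mul_le_mul_left c (card_le_card ?_))
  exact image_subset_iff.mpr hU

theorem exists_embedding_of_le_card_window {lam β r : ℕ} (hr : r ≤ #(window lam β)) :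
    ∃ g : Fin r ↪ Fin lam, ∀ i, IsBrocard (β + 2 * g i) := by
  have hmem := fun i => mem_filter.mp (orderEmbOfCardLe_mem (window lam β) hr i)
  refine ⟨⟨fun i => ⟨_, mem_range.mp (hmem i).1⟩, fun a b hab => ?_⟩, fun i => (hmem i).2⟩
  exact (orderEmbOfCardLe (window lam β) hr).injective (Fin.mk.inj hab)

variable {N lam k J : ℕ}

theorem IsAdmissible.card_filter_le_card_window_le (h : IsAdmissible N lam k J) :
    #{β ∈ Icc N (2 * N) | 16 ≤ #(window lam β)} ≤ lam ^ 16 * (6800 * lam) := by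
  have hsub : ({β ∈ Icc N (2 * N) | 16 ≤ #(window lam β)} : Finset ℕ) ⊆
      univ.biUnion fun g : Fin 16 ↪ Fin lam =>
        {β ∈ Icc N (2 * N) | ∀ i, IsBrocard (β + 2 * g i)} := fun β hβ => by
    obtain ⟨hβ, hcard⟩ := mem_filter.mp hβ
    obtain ⟨g, hg⟩ := exists_embedding_of_le_card_window hcard
    exact mem_biUnion.mpr ⟨g, mem_univ g, mem_filter.mpr ⟨hβ, hg⟩⟩
  refine (card_le_card hsub).trans ((card_biUnion_le_card_mul _ _ (6800 * lam) ?_).trans ?_)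
  · refine fun g _ => h.card_le_of_forall_isBrocard_add (fun i => (g i).2.le)
      (Fin.val_injective.comp g.injective) fun β hβ => ?_
    obtain ⟨hβ, hsol⟩ := mem_filter.mp hβ
    exact ⟨(mem_Icc.mp hβ).1, (mem_Icc.mp hβ).2, hsol⟩
  · rw [card_univ, Fintype.card_embedding_eq, Fintype.card_fin, Fintype.card_fin]
    exact Nat.mul_le_mul_right _ (Nat.descFactorial_le_pow lam 16)

theorem card_image_blockBase_le :
    #((Ioc N (2 * N)).image (blockBase lam)) ≤ 2 * (N / lam + 1) := by
  have hsub : (Ioc N (2 * N)).image (blockBase lam) ⊆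
      (range (N / lam + 1) ×ˢ range 2).image fun z => 2 * lam * z.1 + z.2 := by
    refine image_subset_iff.mpr fun n hn => mem_image.mpr ⟨(n / 2 / lam, n % 2), ?_, rfl⟩
    refine mem_product.mpr ⟨mem_range.mpr (Nat.lt_succ_of_le ?_), mem_range.mpr ?_⟩
    · exact Nat.div_le_div_right (by have := (mem_Ioc.mp hn).2; lia)
    · exact Nat.mod_lt n two_pos
  refine (card_le_card hsub).trans (card_image_le.trans_eq ?_)
  rw [card_product, card_range, card_range, mul_comm]

theorem card_filter_blockBase_lt_le (hlam : 0 < lam) :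
    #{n ∈ Ioc N (2 * N) | IsBrocard n ∧ blockBase lam n < N} ≤ lam * (2 * lam) := by
  refine (card_le_mul_card_of_blockBase_mem (U := Ico (N - 2 * lam) N) hlam
    (fun n hn => (mem_filter.mp hn).2.1) (fun n hn => ?_) fun n _ => card_window_le lam _).trans ?_
  · obtain ⟨hn, -, hlt⟩ := mem_filter.mp hn
    have := (mem_Ioc.mp hn).1
    have := blockBase_add lam n
    have := Nat.mod_lt (n / 2) hlam
    exact mem_Ico.mpr ⟨by lia, hlt⟩
  · rw [Nat.card_Ico]
    gcongr
    lia

theorem card_filter_card_window_le (hlam : 0 < lam) :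
    #{n ∈ Ioc N (2 * N) | IsBrocard n ∧ #(window lam (blockBase lam n)) ≤ 15} ≤
      15 * (2 * (N / lam + 1)) :=
  (card_le_mul_card_of_blockBase_mem hlam (fun _ hn => (mem_filter.mp hn).2.1)
    (fun _ hn => mem_image_of_mem _ (mem_filter.mp hn).1) fun _ hn => (mem_filter.mp hn).2.2).trans
    (Nat.mul_le_mul_left _ card_image_blockBase_le)

theorem IsAdmissible.card_filter_le_card_window_blockBase_le (h : IsAdmissible N lam k J) :
    #{n ∈ Ioc N (2 * N) | IsBrocard n ∧
      N ≤ blockBase lam n ∧ 16 ≤ #(window lam (blockBase lam n))} ≤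
      lam * (lam ^ 16 * (6800 * lam)) := by
  refine (card_le_mul_card_of_blockBase_mem h.one_le_lam (fun n hn => (mem_filter.mp hn).2.1)
    (fun n hn => ?_) fun n _ => card_window_le lam _).trans
    (Nat.mul_le_mul_left _ h.card_filter_le_card_window_le)
  obtain ⟨hn, -, hN, hcard⟩ := mem_filter.mp hn
  have := (mem_Ioc.mp hn).2
  have := blockBase_add lam n
  exact mem_filter.mpr ⟨mem_Icc.mpr ⟨hN, by lia⟩, hcard⟩

theorem IsAdmissible.card_filter_Ioc_isBrocard_le (h : IsAdmissible N lam k J) :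
    #{n ∈ Ioc N (2 * N) | IsBrocard n} ≤
      lam * (2 * lam) + 15 * (2 * (N / lam + 1)) + lam * (lam ^ 16 * (6800 * lam)) := by
  have hcover : ({n ∈ Ioc N (2 * N) | IsBrocard n} : Finset ℕ) ⊆
      ({n ∈ Ioc N (2 * N) | IsBrocard n ∧ blockBase lam n < N} ∪
        {n ∈ Ioc N (2 * N) | IsBrocard n ∧ #(window lam (blockBase lam n)) ≤ 15}) ∪
      {n ∈ Ioc N (2 * N) | IsBrocard n ∧
        N ≤ blockBase lam n ∧ 16 ≤ #(window lam (blockBase lam n))} := fun n hn => by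
    obtain ⟨hn, hsol⟩ := mem_filter.mp hn
    simp only [mem_union, mem_filter, hn, hsol, true_and]
    lia
  refine (card_le_card hcover).trans ((card_union_le _ _).trans (add_le_add ?_ ?_))
  · exact (card_union_le _ _).trans (add_le_add (card_filter_blockBase_lt_le h.one_le_lam)
      (card_filter_card_window_le h.one_le_lam))
  · exact h.card_filter_le_card_window_blockBase_le

theorem exists_isAdmissible {y : ℝ} (hy : y ^ 34 = N) (hN : 100 ≤ Real.log N) (hy₀ : 0 ≤ y) :
    ∃ lam k J, IsAdmissible N lam k J ∧ y / 8 ≤ lam ∧ (lam : ℝ) ≤ y := by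
  have hNpos : (0 : ℝ) < N := by
    refine lt_of_le_of_ne N.cast_nonneg fun h₀ => ?_
    rw [← h₀, Real.log_zero] at hN
    norm_num at hN
  have hy₄ : 4 ≤ y := by
    refine le_of_pow_le_pow_left₀ (n := 34) (by norm_num) hy₀ ?_
    calc (4 : ℝ) ^ 34 ≤ 2 ^ 100 := by norm_num
      _ ≤ Real.exp 1 ^ 100 := by gcongr; linarith [Real.add_one_le_exp 1]
      _ = Real.exp 100 := by rw [← Real.exp_nat_mul]; norm_num
      _ ≤ y ^ 34 := by rwa [hy, ← Real.le_log_iff_exp_le hNpos]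
  have hle : (⌊y / 4⌋₊ : ℝ) ≤ y / 4 := Nat.floor_le (by positivity)
  have hlt : y / 4 < ⌊y / 4⌋₊ + 1 := Nat.lt_floor_add_one _
  have hone : 1 ≤ ⌊y / 4⌋₊ := Nat.one_le_floor_iff _ |>.mpr (by linarith)
  have hone' : (1 : ℝ) ≤ ⌊y / 4⌋₊ := mod_cast hone
  refine ⟨⌊y / 4⌋₊, N / 4, _, ⟨hN, hone, ?_, rfl, rfl⟩, by linarith, by linarith⟩
  have hpow : (4 * (⌊y / 4⌋₊ : ℝ)) ^ 34 ≤ N := by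
    rw [← hy]
    gcongr
    linarith
  exact_mod_cast hpow

theorem card_filter_Ioc_isBrocard_le (hN : 100 ≤ Real.log N) :
    (#{n ∈ Ioc N (2 * N) | IsBrocard n} : ℝ) ≤ 7100 * (N : ℝ) ^ ((33 : ℝ) / 34) := by
  have hpow : ∀ m : ℕ, ((N : ℝ) ^ ((1 : ℝ) / 34)) ^ m = (N : ℝ) ^ ((m : ℝ) / 34) := fun m => by
    rw [← Real.rpow_mul_natCast N.cast_nonneg, one_div_mul_eq_div]
  set y : ℝ := (N : ℝ) ^ ((1 : ℝ) / 34)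
  have hy : y ^ 34 = N := by
    rw [hpow, Nat.cast_ofNat, div_self (by norm_num), Real.rpow_one]
  obtain ⟨lam, k, J, h, hylam, hlamy⟩ := exists_isAdmissible hy hN (by positivity)
  have hlam : (1 : ℝ) ≤ lam := mod_cast h.one_le_lam
  have hy₁ : 1 ≤ y := hlam.trans hlamy
  have hdiv : ((N / lam : ℕ) : ℝ) ≤ 8 * y ^ 33 := by
    refine Nat.cast_div_le.trans ((div_le_iff₀ (by positivity)).mpr ?_)
    calc (N : ℝ) = 8 * y ^ 33 * (y / 8) := by rw [← hy]; ring
      _ ≤ 8 * y ^ 33 * lam := by gcongr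
  have hlam_pow : ∀ m ≤ 33, (lam : ℝ) ^ m ≤ y ^ 33 := fun m hm =>
    (pow_le_pow_left₀ (by positivity) hlamy m).trans (pow_le_pow_right₀ hy₁ hm)
  rw [show (N : ℝ) ^ ((33 : ℝ) / 34) = y ^ 33 from (hpow 33).symm]
  calc (#{n ∈ Ioc N (2 * N) | IsBrocard n} : ℝ)
      ≤ lam * (2 * lam) + 15 * (2 * ((N / lam : ℕ) + 1)) + lam * (lam ^ 16 * (6800 * lam)) :=
        mod_cast h.card_filter_Ioc_isBrocard_le
    _ = 2 * lam ^ 2 + 30 * (N / lam : ℕ) + 30 + 6800 * (lam : ℝ) ^ 18 := by ring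
    _ ≤ 2 * y ^ 33 + 30 * (8 * y ^ 33) + 30 * y ^ 33 + 6800 * y ^ 33 := by
      have hone : (1 : ℝ) ≤ y ^ 33 := one_le_pow₀ hy₁
      have hsq := hlam_pow 2 (by norm_num)
      have heighteen := hlam_pow 18 (by norm_num)
      linarith
    _ ≤ 7100 * y ^ 33 := by
      have : 0 ≤ y ^ 33 := by positivity
      linarith

end Counting

section DyadicSummation

variable {P : ℕ → Prop} {α A : ℝ} {N₀ : ℕ}

theorem card_filter_Icc_le_add_card_filter_Ioc (M : ℕ) :
    #{n ∈ Icc 1 M | P n} ≤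
      #{n ∈ Icc 1 ((M + 1) / 2) | P n} + #{n ∈ Ioc ((M + 1) / 2) (2 * ((M + 1) / 2)) | P n} := by
  refine (card_le_card fun n hn => ?_).trans (card_union_le _ _)
  simp only [mem_union, mem_filter, mem_Icc, mem_Ioc] at hn ⊢
  by_cases hnM : n ≤ (M + 1) / 2
  · exact Or.inl ⟨⟨hn.1.1, hnM⟩, hn.2⟩
  · exact Or.inr ⟨by lia, hn.2⟩

theorem rpow_half_le {M : ℕ} (hα : 0 ≤ α) (hM : 3 ≤ M) :
    (((M + 1) / 2 : ℕ) : ℝ) ^ α ≤ (2 / 3) ^ α * (M : ℝ) ^ α := by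
  rw [← Real.mul_rpow (by norm_num) M.cast_nonneg]
  refine Real.rpow_le_rpow (Nat.cast_nonneg _) ?_ hα
  have : (3 : ℝ) * ((M + 1) / 2 : ℕ) ≤ 2 * M := mod_cast (by lia : 3 * ((M + 1) / 2) ≤ 2 * M)
  linarith

theorem exists_forall_card_filter_le_mul_rpow (hα : 0 < α) (hA : 0 ≤ A)
    (hP : ∀ N ≥ N₀, (#{n ∈ Ioc N (2 * N) | P n} : ℝ) ≤ A * (N : ℝ) ^ α) :
    ∃ C : ℝ, 0 < C ∧ ∀ M : ℕ, 0 < M → (#{n ∈ Icc 1 M | P n} : ℝ) ≤ C * (M : ℝ) ^ α := by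
  set ρ : ℝ := (2 / 3) ^ α
  have hρ : ρ < 1 := Real.rpow_lt_one (by norm_num) (by norm_num) hα
  have hρ' : 0 < 1 - ρ := sub_pos.mpr hρ
  have : 0 ≤ ρ := by positivity
  set C : ℝ := A / (1 - ρ) + (2 * N₀ + 3)
  have hC : (C + A) * ρ ≤ C := by
    have : A ≤ C * (1 - ρ) := by
      rw [← div_le_iff₀ hρ']
      exact le_add_of_nonneg_right (by positivity)
    nlinarith
  refine ⟨C, by positivity, fun M => ?_⟩
  induction M using Nat.strong_induction_on with
  | _ M ih =>
    intro hM
    by_cases hsmall : M ≤ 2 * N₀ + 3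
    · have hone : 1 ≤ (M : ℝ) ^ α := Real.one_le_rpow (mod_cast hM) hα.le
      calc (#{n ∈ Icc 1 M | P n} : ℝ) ≤ M := mod_cast (card_filter_le _ _).trans_eq (by simp)
        _ ≤ 2 * N₀ + 3 := mod_cast hsmall
        _ ≤ C := le_add_of_nonneg_left (by positivity)
        _ ≤ C * (M : ℝ) ^ α := le_mul_of_one_le_right (by positivity) hone
    · calc (#{n ∈ Icc 1 M | P n} : ℝ)
          ≤ #{n ∈ Icc 1 ((M + 1) / 2) | P n} +
              #{n ∈ Ioc ((M + 1) / 2) (2 * ((M + 1) / 2)) | P n} :=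
            mod_cast card_filter_Icc_le_add_card_filter_Ioc M
        _ ≤ C * (((M + 1) / 2 : ℕ) : ℝ) ^ α + A * (((M + 1) / 2 : ℕ) : ℝ) ^ α :=
            add_le_add (ih _ (by lia) (by lia)) (hP _ (by lia))
        _ = (C + A) * (((M + 1) / 2 : ℕ) : ℝ) ^ α := by ring
        _ ≤ (C + A) * (ρ * (M : ℝ) ^ α) := by
            gcongr
            exact rpow_half_le hα.le (by lia)
        _ = (C + A) * ρ * (M : ℝ) ^ α := by ring
        _ ≤ C * (M : ℝ) ^ α := by gcongr

end DyadicSummation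

end BrocardRamanujan

/-- **Power saving bound for the Brocard–Ramanujan problem.**
There exists a positive constant `C` such that for all positive integers `N`, the number of
positive integers `n ≤ N` for which there exists an integer `x` with `n! + 1 = x^2` is at most
`C·N^(33/34)`. -/
theorem brocard_ramanujan_power_saving :
    ∃ C : ℝ, 0 < C ∧ ∀ N : ℕ, 0 < N →
      (((Finset.Icc 1 N).filter
          (fun n => ∃ x : ℤ, (n ! : ℤ) + 1 = x ^ 2)).card : ℝ)
        ≤ C * (N : ℝ) ^ ((33 : ℝ) / 34) := by
  refine BrocardRamanujan.exists_forall_card_filter_le_mul_rpow (P := BrocardRamanujan.IsBrocard)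
    (N₀ := ⌈Real.exp 100⌉₊) (by norm_num) (by norm_num : (0 : ℝ) ≤ 7100) fun N hN => ?_
  have hexp : Real.exp 100 ≤ N := Nat.ceil_le.mp hN
  refine BrocardRamanujan.card_filter_Ioc_isBrocard_le ?_
  rwa [Real.le_log_iff_exp_le ((Real.exp_pos 100).trans_le hexp)]
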